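/- arXiv:1708.09640 — 2 statements merged into one kernel-verified Lean document; each statement's English description precedes it below -/
import Mathlib

section
/- Let 𝓛u = Σ_{i,j} a^{ij} ∂_{ij}u + Σ_i b^i ∂_i u on ℝ^d, where a is locally Lipschitz with values in symmetric positive definite matrices, a is bounded, ⟨ξ, a(x)ξ⟩ ≥ η₀|ξ|² for all x, ξ (some η₀ > 0), and b, V are Borel measurable with sup_x |b(x)| ≤ M and sup_x |V(x)| ≤ γ. Assume the generalized principal eigenvalue satisfies λ*(𝓛,V) ≤ 0. Let u be a C² function on ℝ^d with 𝓛u + Vu = 0 on ℝ^d, and suppose there are ε > 0 and C_ε > 0 such that |u(x)| ≤ C_ε exp(−(M/(2η₀) + √(M²/(4η₀²) + γ/η₀) + ε)|x|) for all x ∈ ℝ^d. Then u ≡ 0. -/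
open Metric Set Filter

noncomputable section

/-- `ℝ^d` as a Euclidean space. -/
abbrev Euc (d : ℕ) := EuclideanSpace ℝ (Fin d)

/-- First partial derivative `∂u/∂xᵢ`. -/
def pd {d : ℕ} (u : Euc d → ℝ) (i : Fin d) (x : Euc d) : ℝ :=
  fderiv ℝ u x (EuclideanSpace.single i 1)

/-- Second partial derivative `∂²u/∂xᵢ∂xⱼ`. -/
def pd2 {d : ℕ} (u : Euc d → ℝ) (i j : Fin d) (x : Euc d) : ℝ :=
  fderiv ℝ (fun y => pd u j y) x (EuclideanSpace.single i 1)

/-- The second-order operator `𝓛u = Σ aᶦʲ ∂ᵢⱼu + Σ bᶦ ∂ᵢu`. -/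
def Lop {d : ℕ} (a : Euc d → Matrix (Fin d) (Fin d) ℝ) (b : Euc d → Euc d)
    (u : Euc d → ℝ) (x : Euc d) : ℝ :=
  (∑ i, ∑ j, a x i j * pd2 u i j x) + ∑ i, b x i * pd u i x

/-- Frobenius norm of a matrix. -/
def frob {d : ℕ} (m : Matrix (Fin d) (Fin d) ℝ) : ℝ :=
  Real.sqrt (∑ i, ∑ j, (m i j) ^ 2)

/-- The quadratic form `⟨ξ, m ξ⟩`. -/
def quadForm {d : ℕ} (m : Matrix (Fin d) (Fin d) ℝ) (ξ : Euc d) : ℝ :=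
  ∑ i, ∑ j, m i j * ξ i * ξ j

/-- Local Hölder continuity on a set. -/
def LocallyHolderOn {E F : Type*} [PseudoMetricSpace E] [PseudoMetricSpace F]
    (f : E → F) (s : Set E) : Prop :=
  ∀ x ∈ s, ∃ (C r : NNReal), 0 < r ∧ r ≤ 1 ∧ ∃ ε > 0, HolderOnWith C r f (Metric.ball x ε ∩ s)

/-- Local Hölder continuity. -/
def LocallyHolder {E F : Type*} [PseudoMetricSpace E] [PseudoMetricSpace F] (f : E → F) : Prop :=
  LocallyHolderOn f Set.univ

/-- The set of `λ ∈ ℝ` admitting a positive C² supersolution of `𝓛φ + Vφ ≤ λφ` on `D`. -/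
def supersolutions {d : ℕ} (a : Euc d → Matrix (Fin d) (Fin d) ℝ) (b : Euc d → Euc d)
    (V : Euc d → ℝ) (D : Set (Euc d)) : Set ℝ :=
  {lam | ∃ φ : Euc d → ℝ, (∀ x ∈ D, 0 < φ x) ∧ ContDiffOn ℝ 2 φ D ∧
    ∀ x ∈ D, Lop a b φ x + V x * φ x ≤ lam * φ x}

/-- The generalized principal eigenvalue `λ*(𝓛,V)` on `D`. -/
def lamStar {d : ℕ} (a : Euc d → Matrix (Fin d) (Fin d) ℝ) (b : Euc d → Euc d)
    (V : Euc d → ℝ) (D : Set (Euc d)) : ℝ :=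
  sInf (supersolutions a b V D)

/-- `λ*(𝓛,V)` is finite: the defining set is nonempty and bounded below. -/
def lamStarFinite {d : ℕ} (a : Euc d → Matrix (Fin d) (Fin d) ℝ) (b : Euc d → Euc d)
    (V : Euc d → ℝ) (D : Set (Euc d)) : Prop :=
  (supersolutions a b V D).Nonempty ∧ BddBelow (supersolutions a b V D)

/-- A ground state of `𝓛 + W` in the open connected set `D`: a positive C² solution of
minimal growth at infinity. -/
def IsGroundState {d : ℕ} (a : Euc d → Matrix (Fin d) (Fin d) ℝ) (b : Euc d → Euc d)
    (W : Euc d → ℝ) (u : Euc d → ℝ) (D : Set (Euc d)) : Prop :=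
  (∀ x ∈ D, 0 < u x) ∧ ContDiffOn ℝ 2 u D ∧ (∀ x ∈ D, Lop a b u x + W x * u x = 0) ∧
  ∀ K : Set (Euc d), IsCompact K → K ⊆ D →
    ∀ v : Euc d → ℝ, ContDiffOn ℝ 2 v (D \ K) → (∀ x ∈ D \ K, 0 < v x) →
      (∀ x ∈ D \ K, Lop a b v x + W x * v x ≤ 0) →
      ∃ K' : Set (Euc d), IsCompact K' ∧ K ⊆ K' ∧ K' ⊆ D ∧
        ∃ κ > 0, ∀ x ∈ D \ K', κ * u x ≤ v x

/-- Membership in `C₀⁺(ℝ^d)`: continuous, nonnegative, not identically zero, vanishing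
at infinity. -/
def C0plus {d : ℕ} (h : Euc d → ℝ) : Prop :=
  Continuous h ∧ (∀ x, 0 ≤ h x) ∧ (∃ x, h x ≠ 0) ∧ Tendsto h (cocompact (Euc d)) (nhds 0)

/-- `λ*` is strictly monotone at `V` on the right. -/
def StrictMonoRight {d : ℕ} (a : Euc d → Matrix (Fin d) (Fin d) ℝ) (b : Euc d → Euc d)
    (V : Euc d → ℝ) : Prop :=
  ∀ h : Euc d → ℝ, C0plus h →
    lamStar a b V Set.univ < lamStar a b (fun x => V x + h x) Set.univ

/-- `λ*` is strictly monotone at `V` (on both sides). -/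
def StrictMonoAt {d : ℕ} (a : Euc d → Matrix (Fin d) (Fin d) ℝ) (b : Euc d → Euc d)
    (V : Euc d → ℝ) : Prop :=
  ∀ h : Euc d → ℝ, C0plus h →
    lamStar a b (fun x => V x - h x) Set.univ < lamStar a b V Set.univ ∧
    lamStar a b V Set.univ < lamStar a b (fun x => V x + h x) Set.univ


lemma Lop_eq_fderiv {d : ℕ} (a : Euc d → Matrix (Fin d) (Fin d) ℝ) (b : Euc d → Euc d)
    {f : Euc d → ℝ} {x : Euc d} (hf : ContDiffAt ℝ 2 f x) :
    Lop a b f x = (∑ i, ∑ j, a x i j *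
        fderiv ℝ (fderiv ℝ f) x (EuclideanSpace.single i 1) (EuclideanSpace.single j 1)) +
      ∑ i, b x i * fderiv ℝ f x (EuclideanSpace.single i 1) := by
  have h : DifferentiableAt ℝ (fderiv ℝ f) x :=
    (hf.fderiv_right (m := 1) (by norm_num)).differentiableAt (by norm_num)
  unfold Lop pd2 pd
  congr 1
  refine Finset.sum_congr rfl fun i _ => Finset.sum_congr rfl fun j _ => ?_
  rw [fderiv_clm_apply h (differentiableAt_const _)]
  simp

lemma Lop_linear_combination {d : ℕ} (a : Euc d → Matrix (Fin d) (Fin d) ℝ) (b : Euc d → Euc d)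
    {f g : Euc d → ℝ} {x : Euc d} (hf : ContDiffAt ℝ 2 f x) (hg : ContDiffAt ℝ 2 g x) (s t : ℝ) :
    Lop a b (fun y => s * f y + t * g y) x = s * Lop a b f x + t * Lop a b g x := by
  have hdiff : ∀ {h : Euc d → ℝ}, ContDiffAt ℝ 2 h x →
      ∀ᶠ y in nhds x, DifferentiableAt ℝ h y := fun hh =>
    (hh.eventually (by simp)).mono fun y hy => hy.differentiableAt (by norm_num)
  have hdd : ∀ {h : Euc d → ℝ}, ContDiffAt ℝ 2 h x → DifferentiableAt ℝ (fderiv ℝ h) x :=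
    fun hh => (hh.fderiv_right (m := 1) (by norm_num)).differentiableAt (by norm_num)
  have h1 : fderiv ℝ (fun y => s * f y + t * g y) =ᶠ[nhds x]
      fun y => s • fderiv ℝ f y + t • fderiv ℝ g y := by
    filter_upwards [hdiff hf, hdiff hg] with y hfy hgy
    exact ((hfy.hasFDerivAt.const_mul s).add (hgy.hasFDerivAt.const_mul t)).fderiv
  have h2 : fderiv ℝ (fderiv ℝ (fun y => s * f y + t * g y)) x =
      s • fderiv ℝ (fderiv ℝ f) x + t • fderiv ℝ (fderiv ℝ g) x := by
    rw [h1.fderiv_eq]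
    exact (((hdd hf).hasFDerivAt.const_smul s).add ((hdd hg).hasFDerivAt.const_smul t)).fderiv
  have h3 : ContDiffAt ℝ 2 (fun y => s * f y + t * g y) x :=
    (contDiffAt_const.mul hf).add (contDiffAt_const.mul hg)
  rw [Lop_eq_fderiv a b h3, Lop_eq_fderiv a b hf, Lop_eq_fderiv a b hg, h2, h1.self_of_nhds]
  simp only [mul_add, Finset.mul_sum, add_apply, smul_apply,
    smul_eq_mul, Finset.sum_add_distrib, mul_left_comm s, mul_left_comm t]
  ring

lemma deriv_deriv_nonneg_of_isLocalMin {g : ℝ → ℝ} {t : ℝ} (hg : IsLocalMin g t)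
    (hc : ContinuousAt g t) : 0 ≤ deriv (deriv g) t := by
  by_contra! h
  have hmax := isLocalMax_of_deriv_deriv_neg h hg.deriv_eq_zero hc
  have hconst : g =ᶠ[nhds t] fun _ => g t := by
    filter_upwards [hg, hmax] with y h1 h2 using le_antisymm h2 h1
  have := hconst.deriv.deriv_eq
  simp at this
  linarith

lemma fderiv_fderiv_nonneg_of_isLocalMin {E : Type*} [NormedAddCommGroup E] [NormedSpace ℝ E]
    {f : E → ℝ} {x : E} (hf : ContDiffAt ℝ 2 f x) (hmin : IsLocalMin f x) (v : E) :
    0 ≤ fderiv ℝ (fderiv ℝ f) x v v := by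
  have hline : ∀ t : ℝ, HasDerivAt (fun t : ℝ => x + t • v) v t := fun t => by
    simpa using ((hasDerivAt_id t).smul_const v).const_add x
  have hl0 : Tendsto (fun t : ℝ => x + t • v) (nhds 0) (nhds x) := by
    have := (hline 0).continuousAt.tendsto
    simpa using this
  have h1 : deriv (fun t : ℝ => f (x + t • v)) =ᶠ[nhds 0]
      fun t => fderiv ℝ f (x + t • v) v := by
    filter_upwards [hl0.eventually (hf.eventually (by simp))] with t ht
    exact ((ht.differentiableAt (by norm_num)).hasFDerivAt.comp_hasDerivAt t (hline t)).deriv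
  have hd : DifferentiableAt ℝ (fderiv ℝ f) (x + (0 : ℝ) • v) := by
    simpa using (hf.fderiv_right (m := 1) (by norm_num)).differentiableAt (by norm_num)
  have h2 : deriv (fun t : ℝ => fderiv ℝ f (x + t • v) v) 0 = fderiv ℝ (fderiv ℝ f) x v v := by
    have hcomp : HasDerivAt (fun t : ℝ => fderiv ℝ f (x + t • v))
        (fderiv ℝ (fderiv ℝ f) (x + (0 : ℝ) • v) v) 0 :=
      hd.hasFDerivAt.comp_hasDerivAt (0 : ℝ) (hline 0)
    have hev := ((ContinuousLinearMap.apply ℝ ℝ v).hasFDerivAt.comp_hasDerivAt (0 : ℝ) hcomp).deriv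
    rw [zero_smul, add_zero] at hev
    exact hev
  rw [← h2, ← h1.deriv_eq]
  refine deriv_deriv_nonneg_of_isLocalMin ?_ ?_
  · have := hl0.eventually hmin
    filter_upwards [this] with t ht
    simpa using ht
  · have hc : ContinuousAt f (x + (0 : ℝ) • v) := by simpa using hf.continuousAt
    exact ContinuousAt.comp (f := fun t : ℝ => x + t • v) hc (hline 0).continuousAt

open scoped MatrixOrder in
lemma sum_mul_bilin_nonneg_of_posSemidef {d : ℕ} {m : Matrix (Fin d) (Fin d) ℝ}
    (hm : m.PosSemidef) (H : Euc d →L[ℝ] Euc d →L[ℝ] ℝ) (hH : ∀ v, 0 ≤ H v v) :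
    0 ≤ ∑ i, ∑ j, m i j *
      H (EuclideanSpace.single i 1) (EuclideanSpace.single j 1) := by
  obtain ⟨B, rfl⟩ := CStarAlgebra.nonneg_iff_eq_star_mul_self.mp hm.nonneg
  have key : ∑ i, ∑ j, (star B * B) i j *
      H (EuclideanSpace.single i 1) (EuclideanSpace.single j 1) =
      ∑ k, H (∑ i, B k i • EuclideanSpace.single i 1) (∑ j, B k j • EuclideanSpace.single j 1) := by
    simp only [Matrix.mul_apply, Matrix.star_apply, star_trivial, map_sum, map_smul,
      sum_apply, smul_apply, smul_eq_mul,
      Finset.sum_mul, Finset.mul_sum]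
    have e : ∀ i : Fin d, (∑ j, ∑ k, B k i * B k j *
        H (EuclideanSpace.single i 1) (EuclideanSpace.single j 1)) = ∑ k, ∑ j, B k i * B k j *
        H (EuclideanSpace.single i 1) (EuclideanSpace.single j 1) := fun i => Finset.sum_comm
    simp only [e]
    rw [Finset.sum_comm]
    refine Finset.sum_congr rfl fun k _ => ?_
    rw [Finset.sum_comm]
    refine Finset.sum_congr rfl fun i _ => Finset.sum_congr rfl fun j _ => ?_
    ring
  rw [key]
  exact Finset.sum_nonneg fun k _ => hH _

lemma Lop_nonneg_of_isLocalMin {d : ℕ} {a : Euc d → Matrix (Fin d) (Fin d) ℝ} {b : Euc d → Euc d}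
    {f : Euc d → ℝ} {x : Euc d} (ha : (a x).PosSemidef) (hf : ContDiffAt ℝ 2 f x)
    (hmin : IsLocalMin f x) : 0 ≤ Lop a b f x := by
  rw [Lop_eq_fderiv a b hf, hmin.fderiv_eq_zero]
  simpa using sum_mul_bilin_nonneg_of_posSemidef ha _
    (fderiv_fderiv_nonneg_of_isLocalMin hf hmin)

/-- The radial profile, as a function of the squared distance. -/
def barrierProfile (θ B s : ℝ) : ℝ := Real.exp (-(θ * √s + B / 2 * Real.log s))

/-- The function `r ^ (-B) * exp (-θ r)` of the distance `r` to `z`. -/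
def barrier {d : ℕ} (θ B : ℝ) (z x : Euc d) : ℝ := barrierProfile θ B (‖x - z‖ ^ 2)

lemma barrier_eq {d : ℕ} (θ B : ℝ) (z x : Euc d) :
    barrier θ B z x = Real.exp (-(θ * ‖x - z‖ + B * Real.log ‖x - z‖)) := by
  unfold barrier barrierProfile
  rw [Real.sqrt_sq (norm_nonneg _), Real.log_pow]
  push_cast
  ring_nf

lemma barrier_pos {d : ℕ} (θ B : ℝ) (z x : Euc d) : 0 < barrier θ B z x := Real.exp_pos _

/-- Minus the logarithmic derivative of `barrierProfile`. -/
def barrierSlope (θ B s : ℝ) : ℝ := θ / (2 * √s) + B / (2 * s)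

lemma hasDerivAt_barrierProfile {θ B s : ℝ} (hs : 0 < s) :
    HasDerivAt (barrierProfile θ B) (-barrierSlope θ B s * barrierProfile θ B s) s := by
  have h : HasDerivAt (barrierProfile θ B)
      (barrierProfile θ B s * -(θ * (1 / (2 * √s)) + B / 2 * s⁻¹)) s :=
    ((((Real.hasDerivAt_sqrt hs.ne').const_mul θ).add
      ((Real.hasDerivAt_log hs.ne').const_mul (B / 2))).neg).exp
  convert h using 1
  have hq : 0 < √s := Real.sqrt_pos.mpr hs
  unfold barrierSlope
  field_simp

lemma exists_hasDerivAt_barrierSlope {θ B s : ℝ} (hθ : 0 ≤ θ) (hB : 0 ≤ B) (hs : 0 < s) :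
    ∃ k ≤ 0, HasDerivAt (barrierSlope θ B) k s := by
  have h1 : HasDerivAt (fun s => 2 * √s) (2 * (1 / (2 * √s))) s :=
    (Real.hasDerivAt_sqrt hs.ne').const_mul 2
  have h2 : HasDerivAt (fun s : ℝ => 2 * s) (2 * 1) s := (hasDerivAt_id s).const_mul 2
  have hq : 0 < √s := Real.sqrt_pos.mpr hs
  have h3 := ((hasDerivAt_const s θ).div h1 (by positivity)).add
    ((hasDerivAt_const s B).div h2 (by positivity))
  refine ⟨_, ?_, h3⟩
  have e1 : 0 ≤ θ * (2 * (1 / (2 * √s))) / (2 * √s) ^ 2 := by positivity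
  have e2 : 0 ≤ B * (2 * 1) / (2 * s) ^ 2 := by positivity
  simp only [zero_mul, zero_sub, neg_div]
  linarith

lemma contDiffAt_barrier {d : ℕ} {θ B : ℝ} {z x : Euc d} (hx : x ≠ z) :
    ContDiffAt ℝ 2 (barrier θ B z) x := by
  have h0 : x - z ≠ 0 := sub_ne_zero.mpr hx
  have h1 : ContDiffAt ℝ 2 (fun y : Euc d => ‖y - z‖) x :=
    (contDiffAt_id.sub contDiffAt_const).norm ℝ h0
  have : barrier θ B z = fun x => Real.exp (-(θ * ‖x - z‖ + B * Real.log ‖x - z‖)) :=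
    funext (barrier_eq θ B z)
  rw [this]
  exact (((contDiffAt_const.mul h1).add
    (contDiffAt_const.mul (h1.log (norm_ne_zero_iff.mpr h0)))).neg).exp

lemma pd_comp_norm_sq {d : ℕ} {F : ℝ → ℝ} {F' : ℝ} {z y : Euc d} (j : Fin d)
    (hF : HasDerivAt F F' (‖y - z‖ ^ 2)) :
    pd (fun x => F (‖x - z‖ ^ 2)) j y = F' * (2 * (y j - z j)) := by
  have hq : HasFDerivAt (fun x : Euc d => ‖x - z‖ ^ 2) (2 • (innerSL ℝ) (y - z)) y := by
    have h := ((contDiff_norm_sq ℝ (n := 1)).differentiable (by norm_num) (y - z)).hasFDerivAt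
    rw [fderiv_norm_sq_apply] at h
    exact h.comp y ((hasFDerivAt_id y).sub_const z)
  have hcomp : HasFDerivAt (fun x => F (‖x - z‖ ^ 2)) (F' • 2 • (innerSL ℝ) (y - z)) y :=
    hF.comp_hasFDerivAt y hq
  unfold pd
  rw [hcomp.fderiv]
  simp [EuclideanSpace.inner_single_right]

lemma pd2_comp_norm_sq {d : ℕ} {F F₁ : ℝ → ℝ} {F₂ : ℝ} {z x : Euc d} (i j : Fin d) (hx : x ≠ z)
    (hF : ∀ s > 0, HasDerivAt F (F₁ s) s) (hF₁ : HasDerivAt F₁ F₂ (‖x - z‖ ^ 2)) :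
    pd2 (fun x => F (‖x - z‖ ^ 2)) i j x =
      4 * F₂ * (x i - z i) * (x j - z j) + 2 * F₁ (‖x - z‖ ^ 2) * (if i = j then 1 else 0) := by
  have hev : (fun y => pd (fun x => F (‖x - z‖ ^ 2)) j y) =ᶠ[nhds x]
      fun y => F₁ (‖y - z‖ ^ 2) * (2 * (y j - z j)) := by
    filter_upwards [isOpen_ne.mem_nhds hx] with y hy
    refine pd_comp_norm_sq j (hF _ ?_)
    have := norm_pos_iff.mpr (sub_ne_zero.mpr hy)
    positivity
  have hq : DifferentiableAt ℝ (fun x : Euc d => ‖x - z‖ ^ 2) x :=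
    ((contDiff_norm_sq ℝ (n := 1)).differentiable (by norm_num) (x - z)).comp x
      (differentiableAt_id.sub_const z)
  have h1 : DifferentiableAt ℝ (fun y => F₁ (‖y - z‖ ^ 2)) x :=
    hF₁.differentiableAt.comp x hq
  have h2 : HasFDerivAt (fun y : Euc d => 2 * (y j - z j))
      ((2 : ℝ) • (EuclideanSpace.proj j : Euc d →L[ℝ] ℝ)) x :=
    (((EuclideanSpace.proj j : Euc d →L[ℝ] ℝ).hasFDerivAt).sub_const (z j)).const_mul 2
  have h3 := pd_comp_norm_sq i hF₁
  unfold pd at h3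
  unfold pd2
  rw [hev.fderiv_eq, (h1.hasFDerivAt.fun_mul h2).fderiv]
  simp only [add_apply, smul_apply, smul_eq_mul, h3,
    PiLp.proj_apply, PiLp.single_apply, eq_comm (a := j)]
  ring

lemma quadForm_sub {d : ℕ} (m : Matrix (Fin d) (Fin d) ℝ) (x z : Euc d) :
    quadForm m (x - z) = ∑ i, ∑ j, m i j * (x i - z i) * (x j - z j) := rfl

lemma Lop_comp_norm_sq {d : ℕ} (a : Euc d → Matrix (Fin d) (Fin d) ℝ) (b : Euc d → Euc d)
    {F F₁ : ℝ → ℝ} {F₂ : ℝ} {z x : Euc d} (hx : x ≠ z)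
    (hF : ∀ s > 0, HasDerivAt F (F₁ s) s) (hF₁ : HasDerivAt F₁ F₂ (‖x - z‖ ^ 2)) :
    Lop a b (fun x => F (‖x - z‖ ^ 2)) x = 4 * F₂ * quadForm (a x) (x - z) +
      2 * F₁ (‖x - z‖ ^ 2) * ((a x).trace + inner ℝ (b x) (x - z)) := by
  have hs : 0 < ‖x - z‖ ^ 2 := by
    have := norm_pos_iff.mpr (sub_ne_zero.mpr hx)
    positivity
  unfold Lop
  simp only [pd2_comp_norm_sq _ _ hx hF hF₁, pd_comp_norm_sq _ (hF _ hs), quadForm_sub,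
    Matrix.trace, Matrix.diag, PiLp.inner_apply, mul_add, Finset.sum_add_distrib, Finset.mul_sum]
  rw [add_assoc]
  congr 1
  · refine Finset.sum_congr rfl fun i _ => Finset.sum_congr rfl fun j _ => ?_
    ring
  congr 1
  · refine Finset.sum_congr rfl fun i _ => ?_
    rw [Finset.sum_eq_single i (fun j _ hj => by simp [Ne.symm hj]) (by simp)]
    simp
    ring
  · refine Finset.sum_congr rfl fun i _ => ?_
    simp
    ring

lemma le_Lop_barrier {d : ℕ} {a : Euc d → Matrix (Fin d) (Fin d) ℝ} {b : Euc d → Euc d}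
    {η A M θ B : ℝ} {z x : Euc d} (hη : 0 < η) (hell : η * ‖x - z‖ ^ 2 ≤ quadForm (a x) (x - z))
    (htr : (a x).trace ≤ A) (hb : ‖b x‖ ≤ M) (hθ : 0 ≤ θ) (hθM : M ≤ η * θ) (hB : 0 ≤ B)
    (hAB : A ≤ η * B) (hx : x ≠ z) :
    θ * (η * θ - M) * barrier θ B z x ≤ Lop a b (barrier θ B z) x := by
  have hr : 0 < ‖x - z‖ := norm_pos_iff.mpr (sub_ne_zero.mpr hx)
  have hs : 0 < ‖x - z‖ ^ 2 := by positivity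
  obtain ⟨k, hk, hslope⟩ := exists_hasDerivAt_barrierSlope hθ hB hs
  have h := Lop_comp_norm_sq a b hx (F := barrierProfile θ B)
    (fun s hs => hasDerivAt_barrierProfile hs) (hslope.neg.mul (hasDerivAt_barrierProfile hs))
  have hin : inner ℝ (b x) (x - z) ≤ M * ‖x - z‖ :=
    (real_inner_le_norm _ _).trans (by gcongr)
  change _ ≤ Lop a b (fun x => barrierProfile θ B (‖x - z‖ ^ 2)) x
  rw [h]
  change _ * barrierProfile θ B (‖x - z‖ ^ 2) ≤ _
  simp only [Pi.neg_apply]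
  have hP : 0 < barrierProfile θ B (‖x - z‖ ^ 2) := Real.exp_pos _
  have hσ : barrierSlope θ B (‖x - z‖ ^ 2) * (2 * ‖x - z‖) = θ + B / ‖x - z‖ := by
    unfold barrierSlope
    rw [Real.sqrt_sq hr.le]
    field_simp
  have hσ0 : 0 ≤ barrierSlope θ B (‖x - z‖ ^ 2) := by unfold barrierSlope; positivity
  generalize barrierSlope θ B (‖x - z‖ ^ 2) = σ at *
  generalize barrierProfile θ B (‖x - z‖ ^ 2) = P at *
  generalize quadForm (a x) (x - z) = Q at *
  generalize (a x).trace = T at *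
  generalize inner ℝ (b x) (x - z) = J at *
  generalize ‖x - z‖ = r at *
  have hQ : 0 ≤ Q := le_trans (by positivity) hell
  have hmain : θ * (η * θ - M) ≤ 4 * (-k + σ ^ 2) * Q - 2 * σ * (T + J) := by
    have e1 : 0 ≤ -k * Q := mul_nonneg (by linarith) hQ
    have e2 : σ ^ 2 * (η * r ^ 2) ≤ σ ^ 2 * Q := by gcongr
    have e3 : 2 * σ * (T + J) ≤ 2 * σ * (A + M * r) := by gcongr
    have e4 : 4 * (σ ^ 2 * (η * r ^ 2)) - 2 * σ * (A + M * r) =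
        (θ + B / r) * (η * θ - M + (η * B - A) / r) := by
      rw [← hσ]
      have : η * θ = η * (σ * (2 * r)) - η * B / r := by rw [hσ]; ring
      rw [this]
      field_simp
      ring
    have e5 : θ * (η * θ - M) ≤ (θ + B / r) * (η * θ - M + (η * B - A) / r) := by
      have : 0 ≤ (η * B - A) / r := div_nonneg (by linarith) hr.le
      have : 0 ≤ B / r := by positivity
      apply mul_le_mul <;> nlinarith
    linarith
  calc θ * (η * θ - M) * P ≤ (4 * (-k + σ ^ 2) * Q - 2 * σ * (T + J)) * P := by gcongr
    _ = _ := by ring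

lemma continuousOn_barrier {d : ℕ} {θ B ρ : ℝ} {z : Euc d} (hρ : 0 < ρ) :
    ContinuousOn (barrier θ B z) {x | ρ ≤ ‖x - z‖} := fun x (hx : ρ ≤ ‖x - z‖) =>
  (contDiffAt_barrier (sub_ne_zero.mp
    (norm_pos_iff.mp (hρ.trans_le hx)))).continuousAt.continuousWithinAt

lemma exists_isLocalMax_of_pos_of_decay {d : ℕ} {f : Euc d → ℝ} {z y : Euc d} {ρ : ℝ} {g : ℝ → ℝ}
    (hf : ContinuousOn f {x | ρ ≤ ‖x - z‖}) (hbd : ∀ x, ‖x - z‖ = ρ → f x ≤ 0)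
    (hg : Tendsto g atTop (nhds 0)) (hfg : ∀ x, ρ ≤ ‖x - z‖ → f x ≤ g ‖x - z‖)
    (hy : ρ ≤ ‖y - z‖) (hfy : 0 < f y) :
    ∃ x, ρ < ‖x - z‖ ∧ 0 < f x ∧ IsLocalMax f x := by
  have hcont : Continuous fun x : Euc d => ‖x - z‖ := by fun_prop
  have htend : Tendsto (fun x : Euc d => ‖x - z‖) (cocompact (Euc d)) atTop :=
    tendsto_norm_cocompact_atTop.comp
      (Homeomorph.subRight z).isClosedEmbedding.tendsto_cocompact
  have hev : ∀ᶠ x in cocompact (Euc d) ⊓ principal {x | ρ ≤ ‖x - z‖}, f x ≤ f y := by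
    rw [eventually_inf_principal]
    filter_upwards [htend.eventually (hg.eventually (gt_mem_nhds hfy))] with x hx hxρ
    exact (hfg x hxρ).trans hx.le
  obtain ⟨x, hx, hmax⟩ :=
    hf.exists_isMaxOn' (isClosed_le continuous_const hcont) hy hev
  have hfx : 0 < f x := hfy.trans_le (hmax hy)
  have hlt : ρ < ‖x - z‖ := lt_of_le_of_ne hx fun h => (hbd x h.symm).not_gt hfx
  refine ⟨x, hlt, hfx, ?_⟩
  filter_upwards [(isOpen_lt continuous_const hcont).mem_nhds hlt] with w hw
  exact hmax (show ρ ≤ ‖w - z‖ from le_of_lt hw)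

lemma tendsto_exp_neg_linear_add_log {θ B : ℝ} (hθ : 0 < θ) (hB : 0 ≤ B) :
    Tendsto (fun r => Real.exp (-(θ * r + B * Real.log r))) atTop (nhds 0) := by
  refine Real.tendsto_exp_neg_atTop_nhds_zero.comp ?_
  refine tendsto_atTop_mono' _ ?_ (tendsto_id.const_mul_atTop hθ)
  filter_upwards [eventually_ge_atTop 1] with r hr
  have := mul_nonneg hB (Real.log_nonneg hr)
  simp only [id]
  linarith

/-- A nonnegative supersolution of `𝓛 - Γ` decays no faster than a barrier. -/
lemma exists_mul_barrier_le {d : ℕ} {a : Euc d → Matrix (Fin d) (Fin d) ℝ} {b : Euc d → Euc d}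
    (ha : ∀ x, (a x).PosSemidef) {θ B Γ Γ' ρ : ℝ} {z : Euc d} (hθ : 0 < θ) (hB : 0 ≤ B)
    (hΓ : 0 ≤ Γ) (hΓ' : Γ < Γ') (hρ : 0 < ρ)
    (hbar : ∀ x, x ≠ z → Γ' * barrier θ B z x ≤ Lop a b (barrier θ B z) x)
    {φ : Euc d → ℝ} (hφ : ContDiff ℝ 2 φ) (hφ0 : ∀ x, 0 ≤ φ x)
    (hφpos : ∀ x, ‖x - z‖ ≤ ρ → 0 < φ x) (hsup : ∀ x, Lop a b φ x ≤ Γ * φ x) :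
    ∃ c > 0, ∀ x, ρ ≤ ‖x - z‖ → c * barrier θ B z x ≤ φ x := by
  obtain ⟨m, hm, hmle⟩ : ∃ m > 0, ∀ x, ‖x - z‖ ≤ ρ → m ≤ φ x := by
    obtain ⟨x, hx, hmin⟩ := (isCompact_closedBall z ρ).exists_isMinOn
      ⟨z, mem_closedBall_self hρ.le⟩ hφ.continuous.continuousOn
    exact ⟨φ x, hφpos x (mem_closedBall_iff_norm.mp hx), fun y hy =>
      hmin (mem_closedBall_iff_norm.mpr hy)⟩
  set P := Real.exp (-(θ * ρ + B * Real.log ρ)) with hP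
  have hP0 : 0 < P := Real.exp_pos _
  refine ⟨m / P, by positivity, ?_⟩
  by_contra! h
  obtain ⟨y, hy, hlt⟩ := h
  set c := m / P with hc
  have hc0 : 0 < c := by positivity
  obtain ⟨x, hx, hpos, hmax⟩ := exists_isLocalMax_of_pos_of_decay (ρ := ρ) (z := z)
    (f := fun x => c * barrier θ B z x + (-1) * φ x)
    (g := fun r => c * Real.exp (-(θ * r + B * Real.log r)))
    ((continuousOn_const.mul (continuousOn_barrier hρ)).add
      (continuousOn_const.mul hφ.continuous.continuousOn))
    (fun x hx => by
      have h1 : c * barrier θ B z x = m := by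
        rw [barrier_eq, hx, ← hP, hc]
        field_simp
      have := hmle x hx.le
      linarith)
    (by simpa using (tendsto_exp_neg_linear_add_log hθ hB).const_mul c)
    (fun x _ => by
      have := hφ0 x
      rw [barrier_eq]
      linarith)
    hy (by linarith)
  have hxz : x ≠ z := sub_ne_zero.mp (norm_pos_iff.mp (hρ.trans hx))
  have hC := contDiffAt_barrier (θ := θ) (B := B) hxz
  have hmin : IsLocalMin (fun x => (-c) * barrier θ B z x + 1 * φ x) x := by
    filter_upwards [hmax] with w hw
    linarith
  have hL := Lop_nonneg_of_isLocalMin (b := b) (ha x)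
    ((contDiffAt_const.mul hC).add (contDiffAt_const.mul hφ.contDiffAt)) hmin
  rw [Lop_linear_combination a b hC hφ.contDiffAt] at hL
  have h1 := mul_le_mul_of_nonneg_left (hbar x hxz) hc0.le
  have h2 := hsup x
  have h3 : Γ * φ x ≤ Γ * (c * barrier θ B z x) := by gcongr; linarith
  have h4 : 0 < (Γ' - Γ) * (c * barrier θ B z x) :=
    mul_pos (by linarith) (mul_pos hc0 (barrier_pos _ _ _ _))
  linarith

lemma exists_le_mul_barrier {d : ℕ} {u : Euc d → ℝ} {C Θ θ B : ℝ} (hC : 0 < C) (hΘ : 0 ≤ Θ)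
    (hθ : θ < Θ) (hB : 0 < B) (hu : ∀ x, |u x| ≤ C * Real.exp (-(Θ * ‖x‖))) (z : Euc d) :
    ∃ K > 0, ∀ x, x ≠ z → |u x| ≤ K * barrier θ B z x := by
  set τ := (Θ - θ) / B with hτ
  have hτ0 : 0 < τ := div_pos (by linarith) hB
  refine ⟨C * Real.exp (Θ * ‖z‖ + B * (-1 - Real.log τ)), by positivity, fun x hx => ?_⟩
  have hr : 0 < ‖x - z‖ := norm_pos_iff.mpr (sub_ne_zero.mpr hx)
  refine (hu x).trans ?_
  rw [barrier_eq, mul_assoc, ← Real.exp_add]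
  gcongr
  have h1 := Real.log_le_sub_one_of_pos (mul_pos hτ0 hr)
  rw [Real.log_mul hτ0.ne' hr.ne'] at h1
  have h2 : B * Real.log ‖x - z‖ ≤ B * (τ * ‖x - z‖ - 1 - Real.log τ) := by gcongr; linarith
  have h3 : B * (τ * ‖x - z‖) = (Θ - θ) * ‖x - z‖ := by rw [hτ]; field_simp
  have h4 : Θ * ‖x - z‖ ≤ Θ * (‖x‖ + ‖z‖) := by gcongr; exact norm_sub_le _ _
  linarith

lemma tendsto_const_mul_exp_neg {C κ : ℝ} (hκ : 0 < κ) :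
    Tendsto (fun r => C * Real.exp (-(κ * r))) atTop (nhds 0) := by
  have := (Real.tendsto_exp_neg_atTop_nhds_zero.comp
    (tendsto_id.const_mul_atTop hκ)).const_mul C
  simpa using this

lemma barrier_eq_exp_mul_barrier {d : ℕ} (θ θ' B : ℝ) (z x : Euc d) :
    barrier θ' B z x = Real.exp (-((θ' - θ) * ‖x - z‖)) * barrier θ B z x := by
  rw [barrier_eq, barrier_eq, ← Real.exp_add]
  ring_nf

/-- A nonnegative solution that decays faster than a strict subsolution barrier vanishes. -/
lemma not_pos_of_nonneg_of_decay {d : ℕ} (hd : 1 ≤ d) {a : Euc d → Matrix (Fin d) (Fin d) ℝ}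
    {b : Euc d → Euc d} (ha : ∀ x, (a x).PosSemidef) {θ θ' B Γ Γ' K : ℝ} {z : Euc d}
    (hθ : 0 < θ) (hθ' : θ < θ') (hB : 0 ≤ B) (hΓ : 0 ≤ Γ) (hΓ' : Γ < Γ')
    (hbar : ∀ x, x ≠ z → Γ' * barrier θ B z x ≤ Lop a b (barrier θ B z) x)
    {u : Euc d → ℝ} (hu : ContDiff ℝ 2 u) (hu0 : ∀ x, 0 ≤ u x)
    (hsup : ∀ x, Lop a b u x ≤ Γ * u x) (hK : ∀ x, x ≠ z → |u x| ≤ K * barrier θ' B z x) :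
    ¬ 0 < u z := by
  intro hz
  obtain ⟨ρ, hρ, hball⟩ : ∃ ρ > 0, ∀ x, ‖x - z‖ ≤ ρ → 0 < u x := by
    obtain ⟨ρ, hρ, h⟩ := Metric.nhds_basis_closedBall.eventually_iff.mp
      (hu.continuous.continuousAt.eventually (lt_mem_nhds hz))
    exact ⟨ρ, hρ, fun x hx => h (mem_closedBall_iff_norm.mpr hx)⟩
  obtain ⟨c, hc, hcle⟩ := exists_mul_barrier_le ha hθ hB hΓ hΓ' hρ hbar hu hu0 hball hsup
  obtain ⟨r, hr, hrρ⟩ := (((tendsto_const_mul_exp_neg (C := K) (sub_pos.mpr hθ')).eventually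
    (gt_mem_nhds hc)).and (eventually_ge_atTop ρ)).exists
  have : Nonempty (Fin d) := ⟨⟨0, hd⟩⟩
  obtain ⟨v, hv⟩ := exists_norm_eq (Euc d) (hρ.le.trans hrρ)
  have hvz : ‖(z + v) - z‖ = r := by simpa using hv
  have hne : z + v ≠ z := sub_ne_zero.mp (norm_pos_iff.mp (by rw [hvz]; linarith))
  have h1 := hcle (z + v) (by rw [hvz]; exact hrρ)
  have h2 := (le_abs_self _).trans (hK (z + v) hne)
  rw [barrier_eq_exp_mul_barrier θ, hvz, ← mul_assoc] at h2
  exact absurd (le_of_mul_le_mul_right (h1.trans h2) (barrier_pos _ _ _ _)) (not_le.mpr hr)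

/-- A solution dominated by a fast-decaying barrier cannot change sign if positive supersolutions
exist for arbitrarily small `δ > 0`. -/
lemma not_pos_of_neg_of_decay {d : ℕ} {a : Euc d → Matrix (Fin d) (Fin d) ℝ}
    {b : Euc d → Euc d} {V : Euc d → ℝ} (ha : ∀ x, (a x).PosSemidef) {θ θ' B γ κ K : ℝ} {z : Euc d}
    (hθ : 0 < θ) (hθ' : θ < θ') (hB : 0 ≤ B) (hκ : 0 < κ) (hV : ∀ x, |V x| ≤ γ)
    (hbar : ∀ x, x ≠ z → (γ + κ) * barrier θ B z x ≤ Lop a b (barrier θ B z) x)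
    (hbar' : ∀ x, x ≠ z → (γ + κ) * barrier θ' B z x ≤ Lop a b (barrier θ' B z) x)
    (hφ : ∀ δ > 0, ∃ φ : Euc d → ℝ, (∀ x, 0 < φ x) ∧ ContDiff ℝ 2 φ ∧
      ∀ x, Lop a b φ x + V x * φ x ≤ δ * φ x)
    {u : Euc d → ℝ} (hu : ContDiff ℝ 2 u) (hsol : ∀ x, Lop a b u x + V x * u x = 0)
    (hK0 : 0 < K) (hK : ∀ x, x ≠ z → |u x| ≤ K * barrier θ' B z x) (hz : u z < 0) (y : Euc d) :
    u y ≤ 0 := by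
  by_contra! hy
  have hγ : 0 ≤ γ := (abs_nonneg _).trans (hV z)
  obtain ⟨ρ, hρ, hball⟩ : ∃ ρ > 0, ∀ x, ‖x - z‖ ≤ ρ → u x < u z / 2 := by
    obtain ⟨ρ, hρ, h⟩ := Metric.nhds_basis_closedBall.eventually_iff.mp
      (hu.continuous.continuousAt.eventually (gt_mem_nhds (show u z < u z / 2 by linarith)))
    exact ⟨ρ, hρ, fun x hx => h (mem_closedBall_iff_norm.mpr hx)⟩
  set P := Real.exp (-(θ' * ρ + B * Real.log ρ)) with hP
  have hP0 : 0 < P := Real.exp_pos _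
  obtain ⟨s, hs, hsP⟩ : ∃ s > 0, s * P = -(u z / 2) :=
    ⟨-(u z / 2) / P, div_pos (by linarith) hP0, by field_simp⟩
  obtain ⟨δ, hδ, hδκ, hδs⟩ : ∃ δ > 0, δ < κ ∧ δ * (K + s) < s * κ := by
    refine ⟨min (κ / 2) (s * κ / (2 * (K + s))), by positivity,
      (min_le_left _ _).trans_lt (by linarith), ?_⟩
    calc min (κ / 2) (s * κ / (2 * (K + s))) * (K + s)
        ≤ s * κ / (2 * (K + s)) * (K + s) := by gcongr; exact min_le_right _ _
      _ = s * κ / 2 := by field_simp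
      _ < s * κ := by have : 0 < s * κ := by positivity
                      linarith
  obtain ⟨φ, hφ0, hφC, hφsup⟩ := hφ δ hδ
  obtain ⟨c, hc, hcle⟩ := exists_mul_barrier_le ha hθ hB (Γ := γ + δ) (by linarith)
    (by linarith) hρ hbar hφC (fun x => (hφ0 x).le) (fun x _ => hφ0 x) (fun x => by
      have h1 := hφsup x
      have h2 : -γ * φ x ≤ V x * φ x :=
        mul_le_mul_of_nonneg_right (neg_le_of_abs_le (hV x)) (hφ0 x).le
      linarith)
  set w : Euc d → ℝ := fun x => 1 * u x + s * barrier θ' B z x with hw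
  have hwle : ∀ x, x ≠ z → w x ≤ (K + s) * barrier θ' B z x := fun x hx => by
    have := (le_abs_self _).trans (hK x hx)
    simp only [hw]
    linarith
  have hyρ : ρ ≤ ‖y - z‖ := by
    by_contra! h
    have := hball y h.le
    linarith
  obtain ⟨x, hx, hpos, hmax⟩ := exists_isLocalMax_of_pos_of_decay (ρ := ρ) (z := z) (y := y)
    (f := fun x => w x / φ x)
    (g := fun r => (K + s) / c * Real.exp (-((θ' - θ) * r)))
    (((continuousOn_const.mul hu.continuous.continuousOn).add
      (continuousOn_const.mul (continuousOn_barrier hρ))).div hφC.continuous.continuousOn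
      fun x _ => (hφ0 x).ne')
    (fun x hx => by
      refine div_nonpos_of_nonpos_of_nonneg ?_ (hφ0 x).le
      have := hball x hx.le
      simp only [hw]
      rw [barrier_eq, hx, ← hP, hsP]
      linarith)
    (tendsto_const_mul_exp_neg (sub_pos.mpr hθ'))
    (fun x hx => by
      have hxz : x ≠ z := sub_ne_zero.mp (norm_pos_iff.mp (hρ.trans_le hx))
      rw [div_le_iff₀ (hφ0 x)]
      refine (hwle x hxz).trans ?_
      rw [barrier_eq_exp_mul_barrier θ]
      calc (K + s) * (Real.exp (-((θ' - θ) * ‖x - z‖)) * barrier θ B z x)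
          = (K + s) / c * Real.exp (-((θ' - θ) * ‖x - z‖)) * (c * barrier θ B z x) := by
            field_simp
        _ ≤ _ := by gcongr; exact hcle x hx)
    hyρ (by
      have := barrier_pos θ' B z y
      have := hφ0 y
      simp only [hw]
      positivity)
  have hxz : x ≠ z := sub_ne_zero.mp (norm_pos_iff.mp (hρ.trans hx))
  set t := w x / φ x with ht
  have htx : t * φ x = w x := div_mul_cancel₀ _ (hφ0 x).ne'
  have hwx : 0 < w x := htx ▸ mul_pos hpos (hφ0 x)
  have hbC := contDiffAt_barrier (θ := θ') (B := B) hxz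
  have hwC : ContDiffAt ℝ 2 w x :=
    (contDiffAt_const.mul hu.contDiffAt).add (contDiffAt_const.mul hbC)
  have hmin : IsLocalMin (fun x => t * φ x + (-1) * w x) x := by
    filter_upwards [hmax] with v hv
    have := (div_le_iff₀ (hφ0 v)).mp hv
    linarith
  have hL := Lop_nonneg_of_isLocalMin (b := b) (ha x)
    ((contDiffAt_const.mul hφC.contDiffAt).add (contDiffAt_const.mul hwC)) hmin
  rw [Lop_linear_combination a b hφC.contDiffAt hwC,
    Lop_linear_combination a b hu.contDiffAt hbC] at hL
  have h1 := mul_le_mul_of_nonneg_left (hφsup x) hpos.le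
  have h2 := mul_le_mul_of_nonneg_left (hbar' x hxz) hs.le
  have h3 := hsol x
  have hb0 := barrier_pos θ' B z x
  have h4 : -γ * (s * barrier θ' B z x) ≤ V x * (s * barrier θ' B z x) :=
    mul_le_mul_of_nonneg_right (neg_le_of_abs_le (hV x)) (by positivity)
  have h5 : δ * w x ≤ δ * ((K + s) * barrier θ' B z x) := by gcongr; exact hwle x hxz
  have h6 : δ * (K + s) * barrier θ' B z x < s * κ * barrier θ' B z x := by gcongr
  have h7 : V x * (t * φ x) = V x * u x + V x * (s * barrier θ' B z x) := by
    rw [htx]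
    simp only [hw]
    ring
  have h8 : δ * (t * φ x) = δ * w x := by rw [htx]
  linarith

lemma exists_supersolution_of_lamStar_nonpos {d : ℕ} {a : Euc d → Matrix (Fin d) (Fin d) ℝ}
    {b : Euc d → Euc d} {V : Euc d → ℝ} {γ : ℝ} (hV : ∀ x, |V x| ≤ γ)
    (hlam : lamStar a b V Set.univ ≤ 0) {δ : ℝ} (hδ : 0 < δ) :
    ∃ φ : Euc d → ℝ, (∀ x, 0 < φ x) ∧ ContDiff ℝ 2 φ ∧
      ∀ x, Lop a b φ x + V x * φ x ≤ δ * φ x := by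
  have hne : (supersolutions a b V Set.univ).Nonempty := by
    refine ⟨γ, fun _ => 1, fun _ _ => one_pos, contDiffOn_const, fun x _ => ?_⟩
    have := le_of_abs_le (hV x)
    simpa [Lop, pd2, pd] using this
  obtain ⟨lam, ⟨φ, hpos, hC, hsup⟩, hlt⟩ :=
    exists_lt_of_csInf_lt hne (hlam.trans_lt hδ)
  refine ⟨φ, fun x => hpos x trivial, contDiffOn_univ.mp hC, fun x => ?_⟩
  exact (hsup x trivial).trans (mul_le_mul_of_nonneg_right hlt.le (hpos x trivial).le)

lemma trace_le_of_frob_le {d : ℕ} {m : Matrix (Fin d) (Fin d) ℝ} {C : ℝ} (h : frob m ≤ C) :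
    m.trace ≤ d * C := by
  have hii : ∀ i, m i i ≤ C := fun i => by
    refine (Real.le_sqrt_of_sq_le ?_).trans h
    refine (Finset.single_le_sum (f := fun j => m i j ^ 2) (fun j _ => sq_nonneg _)
      (Finset.mem_univ i)).trans ?_
    exact Finset.single_le_sum (f := fun i => ∑ j, m i j ^ 2)
      (fun i _ => Finset.sum_nonneg fun j _ => sq_nonneg _) (Finset.mem_univ i)
  calc m.trace ≤ ∑ _i : Fin d, C := Finset.sum_le_sum fun i _ => hii i
    _ = d * C := by simp

/-- The critical rate is the positive root of `η θ² - M θ - γ`, which is increasing beyond it. -/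
lemma lt_mul_sub_of_critical_rate_lt {η M γ ε : ℝ} (hη : 0 < η) (hM : 0 ≤ M) (hγ : 0 ≤ γ)
    (hε : 0 < ε) {θ : ℝ} (hθ : θ = M / (2 * η) + √(M ^ 2 / (4 * η ^ 2) + γ / η) + ε) :
    0 < θ ∧ M < η * θ ∧ γ + η * ε ^ 2 ≤ θ * (η * θ - M) := by
  set S := √(M ^ 2 / (4 * η ^ 2) + γ / η) with hS
  have hS2 : S ^ 2 = M ^ 2 / (4 * η ^ 2) + γ / η := Real.sq_sqrt (by positivity)
  have hS0 : 0 ≤ S := Real.sqrt_nonneg _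
  have hMS : M / (2 * η) ≤ S := by
    refine Real.le_sqrt_of_sq_le ?_
    have : (M / (2 * η)) ^ 2 = M ^ 2 / (4 * η ^ 2) := by field_simp; ring
    have : 0 ≤ γ / η := by positivity
    linarith
  have hp : 0 ≤ M / (2 * η) := by positivity
  have hMp : M = 2 * η * (M / (2 * η)) := by field_simp
  have hγS : γ = η * (S ^ 2 - (M / (2 * η)) ^ 2) := by rw [hS2]; field_simp; ring
  generalize M / (2 * η) = p at *
  subst hθ
  refine ⟨by linarith, ?_, ?_⟩
  · rw [hMp]
    nlinarith
  · rw [hMp, hγS]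
    have : 0 ≤ η * (S * ε) := by positivity
    nlinarith

/-- Theorem 4.2: Landis-type theorem under the assumption `λ*(𝓛,V) ≤ 0`. -/
theorem statement16 {d : ℕ} (hd : 1 ≤ d)
    (a : Euc d → Matrix (Fin d) (Fin d) ℝ) (b : Euc d → Euc d)
    (hposdef : ∀ x, (a x).PosDef)
    (haLip : ∀ R > 0, ∃ C > 0, ∀ x y : Euc d, ‖x‖ ≤ R → ‖y‖ ≤ R →
      frob (a x - a y) ≤ C * ‖x - y‖)
    (habdd : ∃ Ca, ∀ x, frob (a x) ≤ Ca)
    (η₀ : ℝ) (hη : 0 < η₀)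
    (hellip : ∀ x : Euc d, ∀ ξ : Euc d, η₀ * ‖ξ‖ ^ 2 ≤ quadForm (a x) ξ)
    (hbMeas : Measurable b)
    (V : Euc d → ℝ) (hVmeas : Measurable V)
    (M γ : ℝ) (hbM : ∀ x : Euc d, ‖b x‖ ≤ M) (hVγ : ∀ x : Euc d, |V x| ≤ γ)
    (hlam : lamStar a b V Set.univ ≤ 0)
    (u : Euc d → ℝ) (huC2 : ContDiff ℝ 2 u)
    (hsol : ∀ x, Lop a b u x + V x * u x = 0)
    (ε Cε : ℝ) (hε : 0 < ε) (hCε : 0 < Cε)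
    (hdecay : ∀ x : Euc d, |u x| ≤ Cε * Real.exp
      (-((M / (2 * η₀) + Real.sqrt (M ^ 2 / (4 * η₀ ^ 2) + γ / η₀) + ε) * ‖x‖))) :
    ∀ x, u x = 0 := by
  have ha : ∀ x, (a x).PosSemidef := fun x => (hposdef x).posSemidef
  have hM : 0 ≤ M := (norm_nonneg _).trans (hbM 0)
  have hγ : 0 ≤ γ := (abs_nonneg _).trans (hVγ 0)
  obtain ⟨Ca, hCa⟩ := habdd
  have hCa0 : 0 ≤ Ca := (Real.sqrt_nonneg _).trans (hCa 0)
  set Θ := M / (2 * η₀) + Real.sqrt (M ^ 2 / (4 * η₀ ^ 2) + γ / η₀) with hΘ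
  have hΘ0 : 0 ≤ Θ := by positivity
  set B := d * Ca / η₀ + 1 with hB
  have hB0 : 0 < B := by positivity
  have hAB : d * Ca ≤ η₀ * B := by
    rw [hB, mul_add, mul_div_cancel₀ _ hη.ne']
    linarith
  set κ := η₀ * (ε / 3) ^ 2 with hκ
  have hκ0 : 0 < κ := by positivity
  have hbar : ∀ e, ε / 3 ≤ e → ∀ z x : Euc d, x ≠ z →
      (γ + κ) * barrier (Θ + e) B z x ≤ Lop a b (barrier (Θ + e) B z) x := by
    intro e he z x hx
    obtain ⟨h1, h2, h3⟩ := lt_mul_sub_of_critical_rate_lt hη hM hγ (ε := e) (by linarith)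
      (θ := Θ + e) rfl
    have h4 : κ ≤ η₀ * e ^ 2 := by rw [hκ]; gcongr
    refine le_trans ?_ (le_Lop_barrier hη (hellip x _) (trace_le_of_frob_le (hCa x)) (hbM x)
      h1.le h2.le hB0.le hAB hx)
    exact mul_le_mul_of_nonneg_right (by linarith) (barrier_pos _ _ _ _).le
  have hbar₁ := hbar (ε / 3) le_rfl
  have hbar₂ := hbar (2 * ε / 3) (by linarith)
  have hnonpos : ∀ v : Euc d → ℝ, ContDiff ℝ 2 v → (∀ x, Lop a b v x + V x * v x = 0) →
      (∀ x, |v x| ≤ Cε * Real.exp (-((Θ + ε) * ‖x‖))) → ∀ y, v y ≤ 0 := by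
    intro v hv hvsol hvdecay y
    have hK := exists_le_mul_barrier (θ := Θ + 2 * ε / 3) hCε (by linarith) (by linarith) hB0
      hvdecay
    by_cases hneg : ∃ z, v z < 0
    · obtain ⟨z, hz⟩ := hneg
      obtain ⟨K, hK0, hKle⟩ := hK z
      exact not_pos_of_neg_of_decay ha (θ := Θ + ε / 3) (by linarith) (by linarith) hB0.le hκ0 hVγ
        (hbar₁ z) (hbar₂ z) (fun δ hδ => exists_supersolution_of_lamStar_nonpos hVγ hlam hδ)
        hv hvsol hK0 hKle hz y
    · push Not at hneg
      obtain ⟨K, -, hKle⟩ := hK y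
      refine not_lt.mp (not_pos_of_nonneg_of_decay hd ha (θ := Θ + ε / 3) (Γ := γ) (by linarith)
        (by linarith) hB0.le hγ (by linarith) (hbar₁ y) hv hneg (fun x => ?_) hKle)
      have h1 := hvsol x
      have h2 : -γ * v x ≤ V x * v x :=
        mul_le_mul_of_nonneg_right (neg_le_of_abs_le (hVγ x)) (hneg x)
      linarith
  intro x
  have hneg := hnonpos (fun y => (-1) * u y + 0 * u y)
    ((contDiff_const.mul huC2).add (contDiff_const.mul huC2))
    (fun y => by
      rw [Lop_linear_combination a b huC2.contDiffAt huC2.contDiffAt]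
      linarith [hsol y])
    (fun y => by simpa using hdecay y) x
  have hpos := hnonpos u huC2 hsol hdecay x
  linarith
end
end

section
/- Let d ≥ 2 and let 𝓑 ⊂ ℝ^d be a closed ball centered at the origin. Let b : ℝ^d → ℝ^d and V : ℝ^d → ℝ be Borel measurable with sup|b| ≤ M and sup|V| ≤ γ, and suppose there exists r > 0 with 𝓑 ⊂ B_r (the open ball of radius r) such that b is constant and V is constant on the complement of B_r. Let u be a C² function on ℝ^d \ 𝓑 satisfying Δu + ⟨b, ∇u⟩ + Vu = 0 there, and suppose there are ε > 0 and C_ε > 0 such that |u(x)| ≤ C_ε exp(−(M/2 + √(M²/4 + γ) + ε)|x|) for all x ∈ ℝ^d \ 𝓑. Then u ≡ 0 on ℝ^d \ 𝓑. -/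
open Metric Set Filter

noncomputable section

section

open MeasureTheory

lemma pd_mul {d : ℕ} {f g : Euc d → ℝ} {x : Euc d} (hf : DifferentiableAt ℝ f x)
    (hg : DifferentiableAt ℝ g x) (i : Fin d) :
    pd (fun y => f y * g y) i x = f x * pd g i x + g x * pd f i x := by
  simp [pd, fderiv_fun_mul hf hg]

lemma pd_add {d : ℕ} {f g : Euc d → ℝ} {x : Euc d} (hf : DifferentiableAt ℝ f x)
    (hg : DifferentiableAt ℝ g x) (i : Fin d) :
    pd (fun y => f y + g y) i x = pd f i x + pd g i x := by
  simp [pd, fderiv_fun_add hf hg]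

lemma pd_sub {d : ℕ} {f g : Euc d → ℝ} {x : Euc d} (hf : DifferentiableAt ℝ f x)
    (hg : DifferentiableAt ℝ g x) (i : Fin d) :
    pd (fun y => f y - g y) i x = pd f i x - pd g i x := by
  simp [pd, fderiv_fun_sub hf hg]

lemma pd_sum {d : ℕ} {ι : Type*} {s : Finset ι} {f : ι → Euc d → ℝ} {x : Euc d}
    (hf : ∀ j ∈ s, DifferentiableAt ℝ (f j) x) (i : Fin d) :
    pd (fun y => ∑ j ∈ s, f j y) i x = ∑ j ∈ s, pd (f j) i x := by
  simp [pd, fderiv_fun_sum hf]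

lemma pd_coord {d : ℕ} (i j : Fin d) (x : Euc d) :
    pd (fun y => y j) i x = if i = j then 1 else 0 := by
  have h : HasFDerivAt (fun y : Euc d => y j) (EuclideanSpace.proj j : Euc d →L[ℝ] ℝ) x :=
    (EuclideanSpace.proj j : Euc d →L[ℝ] ℝ).hasFDerivAt
  rw [pd, h.fderiv]
  simp [eq_comm]

lemma pd_comp {d : ℕ} {φ : ℝ → ℝ} {f : Euc d → ℝ} {x : Euc d}
    (hφ : DifferentiableAt ℝ φ (f x)) (hf : DifferentiableAt ℝ f x) (i : Fin d) :
    pd (fun y => φ (f y)) i x = deriv φ (f x) * pd f i x := by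
  have := hφ.hasDerivAt.comp_hasFDerivAt x hf.hasFDerivAt
  have h2 : fderiv ℝ (fun y => φ (f y)) x = _ := this.fderiv
  simp [pd, h2]

lemma pd_norm_sq {d : ℕ} (i : Fin d) (x : Euc d) :
    pd (fun y => ‖y‖ ^ 2) i x = 2 * x i := by
  rw [pd, fderiv_norm_sq_apply]
  simp [EuclideanSpace.inner_single_right]

lemma pd_congr {d : ℕ} {f g : Euc d → ℝ} {x : Euc d} (h : f =ᶠ[nhds x] g) (i : Fin d) :
    pd f i x = pd g i x := by
  rw [pd, pd, h.fderiv_eq]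

lemma contDiff_pd {d : ℕ} {w : Euc d → ℝ} (hw : ContDiff ℝ 2 w) (i : Fin d) :
    ContDiff ℝ 1 (pd w i) := by
  have : ContDiff ℝ 1 (fderiv ℝ w) := hw.fderiv_right (by norm_num)
  exact this.clm_apply contDiff_const

lemma continuous_pd {d : ℕ} {w : Euc d → ℝ} (hw : ContDiff ℝ 1 w) (i : Fin d) :
    Continuous (pd w i) :=
  (hw.continuous_fderiv (by norm_num)).clm_apply continuous_const

lemma pd2_comm {d : ℕ} {w : Euc d → ℝ} (hw : ContDiff ℝ 2 w) (i j : Fin d) (x : Euc d) :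
    pd2 w i j x = pd2 w j i x := by
  have hd : DifferentiableAt ℝ (fderiv ℝ w) x :=
    (hw.fderiv_right (m := 1) (by norm_num)).differentiable (by norm_num) x
  have key : ∀ i j : Fin d, pd2 w i j x =
      fderiv ℝ (fderiv ℝ w) x (EuclideanSpace.single i 1) (EuclideanSpace.single j 1) := by
    intro i j
    unfold pd2 pd
    rw [fderiv_clm_apply hd (by fun_prop)]
    simp
  rw [key, key]
  exact (hw.contDiffAt.isSymmSndFDerivAt (by simp)) _ _

/-- The Euler derivative `⟨x, ∇w⟩`. -/
def euler {d : ℕ} (w : Euc d → ℝ) (x : Euc d) : ℝ := ∑ i, x i * pd w i x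

/-- The squared length `|∇w|²` of the gradient. -/
def gradSq {d : ℕ} (w : Euc d → ℝ) (x : Euc d) : ℝ := ∑ i, pd w i x ^ 2

/-- The Laplacian, written with the partial derivatives `pd2`. -/
def lap {d : ℕ} (w : Euc d → ℝ) (x : Euc d) : ℝ := ∑ i, pd2 w i i x

/-- The vector field `α (2⟨x,∇w⟩∇w - |∇w|² x) + β w∇w + γ w² x`, whose weights are functions of
`|x|²`. -/
def pohozaevField {d : ℕ} (α β γ : ℝ → ℝ) (w : Euc d → ℝ) (i : Fin d) (x : Euc d) : ℝ :=
  α (‖x‖ ^ 2) * (2 * (euler w x * pd w i x) - gradSq w x * x i)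
    + β (‖x‖ ^ 2) * (w x * pd w i x) + γ (‖x‖ ^ 2) * (w x * w x * x i)

/-- The divergence of `pohozaevField`. -/
def pohozaevDiv {d : ℕ} (α β γ : ℝ → ℝ) (w : Euc d → ℝ) (x : Euc d) : ℝ :=
  gradSq w x * ((2 - d) * α (‖x‖ ^ 2) - 2 * ‖x‖ ^ 2 * deriv α (‖x‖ ^ 2) + β (‖x‖ ^ 2))
    + 4 * deriv α (‖x‖ ^ 2) * euler w x ^ 2
    + (2 * α (‖x‖ ^ 2) * euler w x + β (‖x‖ ^ 2) * w x) * lap w x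
    + w x * euler w x * (2 * deriv β (‖x‖ ^ 2) + 2 * γ (‖x‖ ^ 2))
    + w x ^ 2 * (d * γ (‖x‖ ^ 2) + 2 * ‖x‖ ^ 2 * deriv γ (‖x‖ ^ 2))

/-- The radial component `⟨x, Y⟩` of `pohozaevField`. -/
def pohozaevFlux {d : ℕ} (α β γ : ℝ → ℝ) (w : Euc d → ℝ) (x : Euc d) : ℝ :=
  α (‖x‖ ^ 2) * (2 * euler w x ^ 2 - ‖x‖ ^ 2 * gradSq w x)
    + β (‖x‖ ^ 2) * (w x * euler w x) + γ (‖x‖ ^ 2) * (‖x‖ ^ 2 * w x ^ 2)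

lemma sum_pd_pohozaevField {d : ℕ} {α β γ : ℝ → ℝ} {w : Euc d → ℝ} (hw : ContDiff ℝ 2 w)
    {x : Euc d} (hα : DifferentiableAt ℝ α (‖x‖ ^ 2)) (hβ : DifferentiableAt ℝ β (‖x‖ ^ 2))
    (hγ : DifferentiableAt ℝ γ (‖x‖ ^ 2)) :
    ∑ i, pd (pohozaevField α β γ w i) i x = pohozaevDiv α β γ w x := by
  have hw1 : ∀ i, DifferentiableAt ℝ (pd w i) x := fun i =>
    (contDiff_pd hw i).differentiable (by norm_num) x
  have hw0 : DifferentiableAt ℝ w x := hw.differentiable (by norm_num) x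
  have hn : DifferentiableAt ℝ (fun y : Euc d => ‖y‖ ^ 2) x :=
    (contDiff_norm_sq ℝ (n := 1)).differentiable (by norm_num) x
  have hc : ∀ i, DifferentiableAt ℝ (fun y : Euc d => y i) x := fun i =>
    (EuclideanSpace.proj i : Euc d →L[ℝ] ℝ).differentiableAt
  have hrad : ∀ {φ : ℝ → ℝ}, DifferentiableAt ℝ φ (‖x‖ ^ 2) →
      DifferentiableAt ℝ (fun y : Euc d => φ (‖y‖ ^ 2)) x := fun h =>
    DifferentiableAt.comp x h hn
  have hprad : ∀ {φ : ℝ → ℝ}, DifferentiableAt ℝ φ (‖x‖ ^ 2) → ∀ i,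
      pd (fun y : Euc d => φ (‖y‖ ^ 2)) i x = 2 * deriv φ (‖x‖ ^ 2) * x i := fun h i => by
    rw [pd_comp (f := fun y : Euc d => ‖y‖ ^ 2) h hn, pd_norm_sq]; ring
  have hE : DifferentiableAt ℝ (euler w) x := by
    unfold euler; exact DifferentiableAt.fun_sum fun j _ => (hc j).mul (hw1 j)
  have hG : DifferentiableAt ℝ (gradSq w) x := by
    unfold gradSq; exact DifferentiableAt.fun_sum fun j _ => (hw1 j).pow 2
  have hpE : ∀ i, pd (euler w) i x = pd w i x + ∑ j, x j * pd2 w i j x := by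
    intro i
    have : pd (euler w) i x = ∑ j, pd (fun y => y j * pd w j y) i x := by
      unfold euler; exact pd_sum (fun j _ => (hc j).mul (hw1 j)) i
    rw [this]
    have h2 : ∀ j, pd (fun y => y j * pd w j y) i x =
        x j * pd2 w i j x + pd w j x * (if i = j then 1 else 0) := fun j => by
      rw [pd_mul (hc j) (hw1 j), pd_coord]; rfl
    simp only [h2, Finset.sum_add_distrib]
    simp [add_comm]
  have hpG : ∀ i, pd (gradSq w) i x = 2 * ∑ j, pd w j x * pd2 w i j x := by
    intro i
    have : pd (gradSq w) i x = ∑ j, pd (fun y => pd w j y * pd w j y) i x := by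
      have : gradSq w = fun y => ∑ j, pd w j y * pd w j y := by
        funext y; simp [gradSq, sq]
      rw [this]; exact pd_sum (fun j _ => (hw1 j).mul (hw1 j)) i
    rw [this, Finset.mul_sum]
    refine Finset.sum_congr rfl fun j _ => ?_
    rw [pd_mul (hw1 j) (hw1 j)]
    change _ * pd2 w i j x + _ * pd2 w i j x = _
    ring
  have hterm : ∀ i, pd (pohozaevField α β γ w i) i x =
      α (‖x‖ ^ 2) * (2 * (euler w x * pd2 w i i x + pd w i x * (pd w i x + ∑ j, x j * pd2 w i j x))
        - (gradSq w x + x i * (2 * ∑ j, pd w j x * pd2 w i j x)))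
      + (2 * (euler w x * pd w i x) - gradSq w x * x i) * (2 * deriv α (‖x‖ ^ 2) * x i)
      + (β (‖x‖ ^ 2) * (w x * pd2 w i i x + pd w i x * pd w i x)
        + w x * pd w i x * (2 * deriv β (‖x‖ ^ 2) * x i))
      + (γ (‖x‖ ^ 2) * (w x * w x + x i * (w x * pd w i x + w x * pd w i x))
        + w x * w x * x i * (2 * deriv γ (‖x‖ ^ 2) * x i)) := by
    intro i
    have d1 : DifferentiableAt ℝ (fun y => euler w y * pd w i y) x := hE.mul (hw1 i)
    have d2 : DifferentiableAt ℝ (fun y => 2 * (euler w y * pd w i y)) x :=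
      d1.const_mul 2
    have d3 : DifferentiableAt ℝ (fun y => gradSq w y * y i) x := hG.mul (hc i)
    have d4 : DifferentiableAt ℝ (fun y => w y * pd w i y) x := hw0.mul (hw1 i)
    have d5 : DifferentiableAt ℝ (fun y => w y * w y) x := hw0.mul hw0
    have d6 : DifferentiableAt ℝ (fun y => w y * w y * y i) x := d5.mul (hc i)
    have e2 : pd (fun y => 2 * (euler w y * pd w i y)) i x =
        2 * pd (fun y => euler w y * pd w i y) i x := by
      rw [pd_mul (differentiableAt_const (2 : ℝ)) d1]
      simp [pd]
    have d23 : DifferentiableAt ℝ (fun y => 2 * (euler w y * pd w i y) - gradSq w y * y i) x :=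
      d2.sub d3
    have t1 : DifferentiableAt ℝ (fun y : Euc d =>
      α (‖y‖ ^ 2) * (2 * (euler w y * pd w i y) - gradSq w y * y i)) x := (hrad hα).mul d23
    have t2 : DifferentiableAt ℝ (fun y : Euc d =>
      β (‖y‖ ^ 2) * (w y * pd w i y)) x := (hrad hβ).mul d4
    have t3 : DifferentiableAt ℝ (fun y : Euc d =>
      γ (‖y‖ ^ 2) * (w y * w y * y i)) x := (hrad hγ).mul d6
    have t12 : DifferentiableAt ℝ (fun y : Euc d =>
      α (‖y‖ ^ 2) * (2 * (euler w y * pd w i y) - gradSq w y * y i) +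
      β (‖y‖ ^ 2) * (w y * pd w i y)) x := t1.add t2
    unfold pohozaevField
    rw [pd_add t12 t3, pd_add t1 t2, pd_mul (hrad hα) d23, pd_mul (hrad hβ) d4,
      pd_mul (hrad hγ) d6, pd_sub d2 d3, e2, pd_mul hE (hw1 i), pd_mul hG (hc i),
      pd_mul hw0 (hw1 i), pd_mul d5 (hc i), pd_mul hw0 hw0, hprad hα, hprad hβ, hprad hγ,
      hpE, hpG, pd_coord]
    simp only [if_true, mul_one]
    rfl
  have hswap : ∑ i, x i * ∑ j, pd w j x * pd2 w i j x
      = ∑ i, pd w i x * ∑ j, x j * pd2 w i j x := by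
    simp only [Finset.mul_sum]
    rw [Finset.sum_comm]
    refine Finset.sum_congr rfl fun i _ => Finset.sum_congr rfl fun j _ => ?_
    rw [pd2_comm hw j i]; ring
  have hnorm : ‖x‖ ^ 2 = ∑ i, x i ^ 2 := by
    rw [EuclideanSpace.norm_sq_eq]; simp
  have hsum : ∑ i, pd (pohozaevField α β γ w i) i x =
      α (‖x‖ ^ 2) * (2 * (euler w x * lap w x + (gradSq w x
        + ∑ i, pd w i x * ∑ j, x j * pd2 w i j x))
        - (d * gradSq w x + 2 * ∑ i, x i * ∑ j, pd w j x * pd2 w i j x))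
      + 2 * deriv α (‖x‖ ^ 2) * (2 * euler w x * euler w x - gradSq w x * ∑ i, x i ^ 2)
      + (β (‖x‖ ^ 2) * (w x * lap w x + gradSq w x)
        + 2 * deriv β (‖x‖ ^ 2) * w x * euler w x)
      + (γ (‖x‖ ^ 2) * (d * (w x * w x) + 2 * w x * euler w x)
        + 2 * deriv γ (‖x‖ ^ 2) * (w x * w x) * ∑ i, x i ^ 2) := by
    simp only [hterm]
    generalize hE' : euler w x = E
    generalize hG' : gradSq w x = G
    have hE2 : E = ∑ i, x i * pd w i x := hE'.symm
    have hG2 : G = ∑ i, pd w i x ^ 2 := hG'.symm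
    have hd : (d : ℝ) * G = ∑ _i : Fin d, G := by simp
    have hd2 : (d : ℝ) * (w x * w x) = ∑ _i : Fin d, (w x * w x) := by simp
    have a1 : α (‖x‖ ^ 2) * (2 * (E * lap w x + (G
        + ∑ i, pd w i x * ∑ j, x j * pd2 w i j x))
        - (d * G + 2 * ∑ i, x i * ∑ j, pd w j x * pd2 w i j x)) = ∑ i,
       α (‖x‖ ^ 2) * (2 * (E * pd2 w i i x + pd w i x * (pd w i x + ∑ j, x j * pd2 w i j x))
        - (G + x i * (2 * ∑ j, pd w j x * pd2 w i j x))) := by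
      rw [hd]
      conv_lhs => enter [2, 1, 2, 2, 1]; rw [hG2]
      rw [lap]
      simp only [Finset.mul_sum, ← Finset.sum_add_distrib, ← Finset.sum_sub_distrib]
      refine Finset.sum_congr rfl fun i _ => ?_
      simp only [mul_add, Finset.mul_sum]
      ring_nf
    have a2 : 2 * deriv α (‖x‖ ^ 2) * (2 * E * E - G * ∑ i, x i ^ 2) = ∑ i,
        (2 * (E * pd w i x) - G * x i) * (2 * deriv α (‖x‖ ^ 2) * x i) := by
      conv_lhs => enter [2, 1, 2]; rw [hE2]
      simp only [Finset.mul_sum, ← Finset.sum_sub_distrib]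
      refine Finset.sum_congr rfl fun i _ => ?_
      ring
    have a3 : (β (‖x‖ ^ 2) * (w x * lap w x + G) + 2 * deriv β (‖x‖ ^ 2) * w x * E) = ∑ i,
        (β (‖x‖ ^ 2) * (w x * pd2 w i i x + pd w i x * pd w i x)
        + w x * pd w i x * (2 * deriv β (‖x‖ ^ 2) * x i)) := by
      rw [hG2, hE2, lap]
      simp only [Finset.mul_sum, ← Finset.sum_add_distrib]
      refine Finset.sum_congr rfl fun i _ => ?_
      ring
    have a4 : (γ (‖x‖ ^ 2) * (d * (w x * w x) + 2 * w x * E)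
        + 2 * deriv γ (‖x‖ ^ 2) * (w x * w x) * ∑ i, x i ^ 2) = ∑ i,
        (γ (‖x‖ ^ 2) * (w x * w x + x i * (w x * pd w i x + w x * pd w i x))
        + w x * w x * x i * (2 * deriv γ (‖x‖ ^ 2) * x i)) := by
      rw [hd2, hE2]
      simp only [Finset.mul_sum, ← Finset.sum_add_distrib]
      refine Finset.sum_congr rfl fun i _ => ?_
      ring
    rw [a1, a2, a3, a4, ← Finset.sum_add_distrib, ← Finset.sum_add_distrib,
      ← Finset.sum_add_distrib]
  rw [hsum, hswap, ← hnorm, pohozaevDiv]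
  ring

lemma integral_pd_eq_zero {d : ℕ} {f : Euc d → ℝ} (hf : ContDiff ℝ 1 f)
    (hs : HasCompactSupport f) (i : Fin d) : ∫ x, pd f i x = 0 := by
  have hc : HasCompactSupport (pd f i) := hs.fderiv_apply ℝ _
  have h := integral_mul_fderiv_eq_neg_fderiv_mul_of_integrable (μ := (volume : Measure (Euc d)))
    (f := fun _ => (1 : ℝ)) (g := f) (v := EuclideanSpace.single i 1) (by simp)
    (by simp only [one_mul]; exact (continuous_pd hf i).integrable_of_hasCompactSupport hc)
    (by simpa using hf.continuous.integrable_of_hasCompactSupport hs)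
    (by simp) (fun x _ => hf.differentiable (by norm_num) x)
  simp only [one_mul, fderiv_fun_const, Pi.zero_apply, zero_apply, zero_mul,
    integral_zero, neg_zero] at h
  exact h

lemma hasCompactSupport_of_norm {d : ℕ} {f : Euc d → ℝ} {T : ℝ}
    (h : ∀ x, T < ‖x‖ ^ 2 → f x = 0) : HasCompactSupport f := by
  refine HasCompactSupport.intro (isCompact_closedBall (0 : Euc d) (|T| + 1)) fun x hx => h x ?_
  have hx' : |T| + 1 < ‖x‖ := by simpa using hx
  nlinarith [le_abs_self T, abs_nonneg T]

lemma contDiff_euler {d : ℕ} {w : Euc d → ℝ} (hw : ContDiff ℝ 2 w) : ContDiff ℝ 1 (euler w) := by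
  unfold euler
  refine ContDiff.sum fun i _ => ContDiff.mul ?_ (contDiff_pd hw i)
  exact (EuclideanSpace.proj i : Euc d →L[ℝ] ℝ).contDiff

lemma contDiff_gradSq {d : ℕ} {w : Euc d → ℝ} (hw : ContDiff ℝ 2 w) :
    ContDiff ℝ 1 (gradSq w) := by
  unfold gradSq
  exact ContDiff.sum fun i _ => (contDiff_pd hw i).pow 2

/-- Integrating the divergence of `pohozaevField`; the weights may be singular at the origin as `w`
vanishes near it. -/
lemma integral_pohozaevDiv {d : ℕ} {α β γ : ℝ → ℝ} {w : Euc d → ℝ} (hw : ContDiff ℝ 2 w)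
    {t₀ T : ℝ} (ht₀ : 0 < t₀) (hw0 : ∀ x, ‖x‖ ^ 2 < t₀ → w x = 0)
    (hα : ContDiffOn ℝ 1 α (Ioi 0)) (hβ : ContDiffOn ℝ 1 β (Ioi 0))
    (hγ : ContDiffOn ℝ 1 γ (Ioi 0)) (hαT : ∀ t, T < t → α t = 0) (hβT : ∀ t, T < t → β t = 0)
    (hγT : ∀ t, T < t → γ t = 0) :
    Integrable (pohozaevDiv α β γ w) ∧ ∫ x, pohozaevDiv α β γ w x = 0 := by
  have hopen : IsOpen {x : Euc d | ‖x‖ ^ 2 < t₀} :=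
    isOpen_lt (by fun_prop) continuous_const
  have hev : ∀ x : Euc d, ‖x‖ ^ 2 < t₀ → w =ᶠ[nhds x] fun _ => 0 := fun x hx => by
    filter_upwards [hopen.mem_nhds hx] with y hy using hw0 y hy
  have hpd0 : ∀ x : Euc d, ‖x‖ ^ 2 < t₀ → ∀ i, pd w i x = 0 := fun x hx i => by
    rw [pd_congr (hev x hx)]; simp [pd]
  have hF0 : ∀ x : Euc d, ‖x‖ ^ 2 < t₀ → ∀ i, pohozaevField α β γ w i x = 0 := fun x hx i => by
    simp [pohozaevField, hpd0 x hx, hw0 x hx, gradSq]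
  have hFT : ∀ i, ∀ x : Euc d, T < ‖x‖ ^ 2 → pohozaevField α β γ w i x = 0 := fun i x hx => by
    simp [pohozaevField, hαT _ hx, hβT _ hx, hγT _ hx]
  have hpos : ∀ x : Euc d, ¬ ‖x‖ ^ 2 < t₀ → Ioi (0 : ℝ) ∈ nhds (‖x‖ ^ 2) := fun x hx =>
    Ioi_mem_nhds (ht₀.trans_le (not_lt.1 hx))
  have hsm : ∀ i, ContDiff ℝ 1 (pohozaevField α β γ w i) := by
    intro i
    refine contDiff_iff_contDiffAt.2 fun x => ?_
    by_cases hx : ‖x‖ ^ 2 < t₀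
    · refine (contDiffAt_const (c := (0 : ℝ))).congr_of_eventuallyEq ?_
      filter_upwards [hopen.mem_nhds hx] with y hy using hF0 y hy i
    · have hn : ContDiffAt ℝ 1 (fun y : Euc d => ‖y‖ ^ 2) x := (contDiff_norm_sq ℝ).contDiffAt
      have hr : ∀ {φ : ℝ → ℝ}, ContDiffOn ℝ 1 φ (Ioi 0) →
          ContDiffAt ℝ 1 (fun y : Euc d => φ (‖y‖ ^ 2)) x := fun h =>
        (h.contDiffAt (hpos x hx)).comp x hn
      have hc : ContDiffAt ℝ 1 (fun y : Euc d => y i) x :=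
        (EuclideanSpace.proj i : Euc d →L[ℝ] ℝ).contDiff.contDiffAt
      have hp := (contDiff_pd hw i).contDiffAt (x := x)
      have h1 : ContDiffAt ℝ 1 w x := hw.contDiffAt.of_le (by norm_num)
      unfold pohozaevField
      exact (((hr hα).mul ((contDiffAt_const.mul ((contDiff_euler hw).contDiffAt.mul hp)).sub
        ((contDiff_gradSq hw).contDiffAt.mul hc))).add ((hr hβ).mul (h1.mul hp))).add
        ((hr hγ).mul ((h1.mul h1).mul hc))
  have hcs : ∀ i, HasCompactSupport (pohozaevField α β γ w i) := fun i =>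
    hasCompactSupport_of_norm (hFT i)
  have hdiv : pohozaevDiv α β γ w = fun x => ∑ i, pd (pohozaevField α β γ w i) i x := by
    funext x
    by_cases hx : ‖x‖ ^ 2 < t₀
    · have h1 : ∀ i, pd (pohozaevField α β γ w i) i x = 0 := fun i => by
        have : pohozaevField α β γ w i =ᶠ[nhds x] fun _ => 0 := by
          filter_upwards [hopen.mem_nhds hx] with y hy using hF0 y hy i
        rw [pd_congr this]; simp [pd]
      simp only [h1, pohozaevDiv, hw0 x hx, euler, gradSq, hpd0 x hx]
      simp
    · have hd : ∀ {φ : ℝ → ℝ}, ContDiffOn ℝ 1 φ (Ioi 0) → DifferentiableAt ℝ φ (‖x‖ ^ 2) :=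
        fun h => (h.contDiffAt (hpos x hx)).differentiableAt (by norm_num)
      exact (sum_pd_pohozaevField hw (hd hα) (hd hβ) (hd hγ)).symm
  have hint : ∀ i, Integrable (fun x => pd (pohozaevField α β γ w i) i x) := fun i =>
    (continuous_pd (hsm i) i).integrable_of_hasCompactSupport ((hcs i).fderiv_apply ℝ _)
  rw [hdiv]
  refine ⟨integrable_finsetSum _ fun i _ => hint i, ?_⟩
  rw [integral_finsetSum _ fun i _ => hint i]
  exact Finset.sum_eq_zero fun i _ => integral_pd_eq_zero (hsm i) (hcs i) i

lemma pohozaevDiv_mul {d : ℕ} {χ α β γ : ℝ → ℝ} {w : Euc d → ℝ} {x : Euc d}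
    (hχ : DifferentiableAt ℝ χ (‖x‖ ^ 2)) (hα : DifferentiableAt ℝ α (‖x‖ ^ 2))
    (hβ : DifferentiableAt ℝ β (‖x‖ ^ 2)) (hγ : DifferentiableAt ℝ γ (‖x‖ ^ 2)) :
    pohozaevDiv (fun t => χ t * α t) (fun t => χ t * β t) (fun t => χ t * γ t) w x =
      χ (‖x‖ ^ 2) * pohozaevDiv α β γ w x
        + 2 * deriv χ (‖x‖ ^ 2) * pohozaevFlux α β γ w x := by
  simp only [pohozaevDiv, pohozaevFlux, deriv_fun_mul hχ hα, deriv_fun_mul hχ hβ,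
    deriv_fun_mul hχ hγ]
  ring

/-- The primitive of `η / α` is a continuously differentiable cutoff. -/
lemma contDiffOn_primitive_div {η α : ℝ → ℝ} (hη : Continuous η) (hα : ContinuousOn α (Ioi 0))
    (hα0 : ∀ t, 0 < t → 0 < α t) {t₁ : ℝ} (ht₁ : 0 < t₁) :
    (∀ t, 0 < t → HasDerivAt (fun t => ∫ s in t₁..t, η s / α s) (η t / α t) t) ∧
      ContDiffOn ℝ 1 (fun t => ∫ s in t₁..t, η s / α s) (Ioi 0) := by
  have hc : ContinuousOn (fun s => η s / α s) (Ioi 0) :=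
    hη.continuousOn.div hα fun s hs => (hα0 s hs).ne'
  have hd : ∀ t, 0 < t → HasDerivAt (fun t => ∫ s in t₁..t, η s / α s) (η t / α t) t := by
    intro t ht
    refine intervalIntegral.integral_hasDerivAt_right ?_ ?_ ?_
    · refine (hc.mono ?_).intervalIntegrable
      intro s hs
      exact lt_of_lt_of_le (lt_min ht₁ ht) hs.1
    · exact hc.stronglyMeasurableAtFilter isOpen_Ioi t ht
    · exact hc.continuousAt (Ioi_mem_nhds ht)
  refine ⟨hd, ?_⟩
  have h1 : (1 : WithTop ℕ∞) = 0 + 1 := by norm_num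
  rw [h1, contDiffOn_succ_iff_deriv_of_isOpen isOpen_Ioi]
  refine ⟨fun t ht => (hd t ht).differentiableAt.differentiableWithinAt, by simp, ?_⟩
  rw [contDiffOn_zero]
  exact hc.congr fun t ht => (hd t ht).deriv

/-- Carleman-type inequality: if the divergence of `pohozaevField` is nonnegative on the support of
the cutoffs, then its outward flux, averaged against `η`, is controlled by the error `F` made
by the outer cutoff `χ`. -/
lemma carleman_inequality {d : ℕ} {α β γ η χ : ℝ → ℝ} {w : Euc d → ℝ} (hw : ContDiff ℝ 2 w)
    {t₁ t₂ T a : ℝ} (ht₁ : 0 < t₁) (ht₁₂ : t₁ ≤ t₂) {t₀ : ℝ} (ht₀ : 0 < t₀)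
    (hw0 : ∀ x, ‖x‖ ^ 2 < t₀ → w x = 0)
    (hα : ContDiffOn ℝ 1 α (Ioi 0)) (hβ : ContDiffOn ℝ 1 β (Ioi 0))
    (hγ : ContDiffOn ℝ 1 γ (Ioi 0)) (hα0 : ∀ t, 0 < t → 0 < α t)
    (hη : Continuous η) (hη0 : ∀ t, 0 ≤ η t) (hη₁ : ∀ t, t ≤ t₁ → η t = 0)
    (hη₂ : ∀ t, t₂ ≤ t → η t = 0)
    (hχ : ContDiff ℝ 1 χ) (hχ0 : ∀ t, 0 ≤ χ t) (hχ1 : ∀ t, t ≤ t₂ → χ t = 1)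
    (hχT : ∀ t, T < t → χ t = 0)
    (hdiv : ∀ x : Euc d, t₁ < ‖x‖ ^ 2 → 0 ≤ pohozaevDiv α β γ w x)
    (hflux : ∀ x : Euc d, t₁ < ‖x‖ ^ 2 → ‖x‖ ^ 2 < t₂ →
      α (‖x‖ ^ 2) * (a * w x ^ 2 - ‖x‖ ^ 2 * gradSq w x) ≤ pohozaevFlux α β γ w x)
    {F : Euc d → ℝ} (hF : Integrable F) (hF0 : ∀ x, 0 ≤ F x)
    (herr : ∀ x : Euc d, t₂ ≤ ‖x‖ ^ 2 →
      |deriv χ (‖x‖ ^ 2) * pohozaevFlux α β γ w x| ≤ F x) :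
    ∫ x : Euc d, η (‖x‖ ^ 2) * (a * w x ^ 2 - ‖x‖ ^ 2 * gradSq w x) ≤
      (∫ s in t₁..t₂, η s / α s) * ∫ x, F x := by
  set θ : ℝ → ℝ := fun t => ∫ s in t₁..t, η s / α s with hθ
  obtain ⟨hθd, hθc⟩ := contDiffOn_primitive_div hη hα.continuousOn hα0 ht₁
  have hθ1 : ∀ t, t ≤ t₁ → θ t = 0 := by
    intro t ht
    refine intervalIntegral.integral_zero_ae (ae_of_all _ fun s hs => ?_)
    rw [uIoc_of_ge ht] at hs
    simp [hη₁ s hs.2]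
  have hθ2 : ∀ t, t₂ ≤ t → θ t = θ t₂ := by
    intro t ht
    have hint : ∀ b c : ℝ, t₁ ≤ b → t₁ ≤ c →
        IntervalIntegrable (fun s => η s / α s) volume b c := fun b c hb hc => by
      refine ContinuousOn.intervalIntegrable ?_
      refine ContinuousOn.mono (s := Ioi 0) (hη.continuousOn.div hα.continuousOn
        fun s hs => (hα0 s hs).ne') ?_
      intro s hs
      exact (ht₁.trans_le (le_min hb hc)).trans_le hs.1
    have : θ t = θ t₂ + ∫ s in t₂..t, η s / α s :=
      (intervalIntegral.integral_add_adjacent_intervals (hint _ _ le_rfl ht₁₂)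
        (hint _ _ ht₁₂ (ht₁₂.trans ht))).symm
    rw [this, intervalIntegral.integral_zero_ae, add_zero]
    refine ae_of_all _ fun s hs => ?_
    rw [uIoc_of_le ht] at hs
    simp [hη₂ s hs.1.le]
  have hθ0 : ∀ t, 0 ≤ θ t := by
    intro t
    rcases le_total t t₁ with h | h
    · rw [hθ1 t h]
    · refine intervalIntegral.integral_nonneg h fun s hs => ?_
      exact div_nonneg (hη0 s) (hα0 s (ht₁.trans_le hs.1)).le
  set ψ : ℝ → ℝ := fun t => θ t * χ t with hψ
  have hψc : ContDiffOn ℝ 1 ψ (Ioi 0) := hθc.mul hχ.contDiffOn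
  have hψT : ∀ t, T < t → ψ t = 0 := fun t ht => by simp [hψ, hχT t ht]
  obtain ⟨hI, hI0⟩ := integral_pohozaevDiv (α := fun t => ψ t * α t) (β := fun t => ψ t * β t)
    (γ := fun t => ψ t * γ t) (T := T) hw ht₀ hw0 (hψc.mul hα) (hψc.mul hβ) (hψc.mul hγ)
    (fun t ht => by simp [hψT t ht]) (fun t ht => by simp [hψT t ht])
    (fun t ht => by simp [hψT t ht])
  have hJ : Integrable fun x : Euc d =>
      η (‖x‖ ^ 2) * (a * w x ^ 2 - ‖x‖ ^ 2 * gradSq w x) := by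
    refine Continuous.integrable_of_hasCompactSupport ?_ ?_
    · have := (contDiff_gradSq hw).continuous
      have := hw.continuous
      fun_prop
    · exact hasCompactSupport_of_norm (T := t₂) fun x hx => by simp [hη₂ _ hx.le]
  have hpt : ∀ x : Euc d, 2 * (η (‖x‖ ^ 2) * (a * w x ^ 2 - ‖x‖ ^ 2 * gradSq w x))
      - 2 * (θ t₂ * F x) ≤
      pohozaevDiv (fun t => ψ t * α t) (fun t => ψ t * β t) (fun t => ψ t * γ t) w x := by
    intro x
    by_cases hx0 : ‖x‖ ^ 2 < t₁
    · have hz : ∀ φ : ℝ → ℝ, (fun t => ψ t * φ t) =ᶠ[nhds (‖x‖ ^ 2)] fun _ => 0 := fun φ => by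
        filter_upwards [Iio_mem_nhds hx0] with t ht
        simp [hψ, hθ1 t (le_of_lt ht)]
      have hz2 : pohozaevDiv (fun t => ψ t * α t) (fun t => ψ t * β t)
          (fun t => ψ t * γ t) w x = 0 := by
        simp only [pohozaevDiv, (hz _).deriv_eq, (hz _).eq_of_nhds]
        simp
      rw [hz2, hη₁ _ hx0.le]
      have := mul_nonneg (hθ0 t₂) (hF0 x)
      linarith
    · have hx1 : t₁ ≤ ‖x‖ ^ 2 := not_lt.1 hx0
      have hpos : 0 < ‖x‖ ^ 2 := ht₁.trans_le hx1
      have hd : ∀ {φ : ℝ → ℝ}, ContDiffOn ℝ 1 φ (Ioi 0) → DifferentiableAt ℝ φ (‖x‖ ^ 2) :=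
        fun h => (h.contDiffAt (Ioi_mem_nhds hpos)).differentiableAt (by norm_num)
      have hψd : deriv ψ (‖x‖ ^ 2) = θ (‖x‖ ^ 2) * deriv χ (‖x‖ ^ 2)
          + η (‖x‖ ^ 2) / α (‖x‖ ^ 2) * χ (‖x‖ ^ 2) := by
        have := ((hθd _ hpos).mul (hχ.differentiable (by norm_num) (‖x‖ ^ 2)).hasDerivAt).deriv
        rw [hψ]
        refine Eq.trans this ?_
        ring
      rw [pohozaevDiv_mul (hd hψc) (hd hα) (hd hβ) (hd hγ), hψd]
      have hP : 0 ≤ ψ (‖x‖ ^ 2) * pohozaevDiv α β γ w x := by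
        rcases hx1.eq_or_lt with h | h
        · rw [← h]; simp [hψ, hθ1 t₁ le_rfl]
        · exact mul_nonneg (mul_nonneg (hθ0 _) (hχ0 _)) (hdiv x h)
      have hαp := hα0 _ hpos
      have hB : -(θ t₂ * F x) ≤ θ (‖x‖ ^ 2) * (deriv χ (‖x‖ ^ 2) * pohozaevFlux α β γ w x) := by
        rcases lt_or_ge (‖x‖ ^ 2) t₂ with h | h
        · have : deriv χ (‖x‖ ^ 2) = 0 := by
            have : χ =ᶠ[nhds (‖x‖ ^ 2)] fun _ => 1 := by
              filter_upwards [Iio_mem_nhds h] with t ht using hχ1 t (le_of_lt ht)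
            rw [this.deriv_eq]; simp
          rw [this]
          have := mul_nonneg (hθ0 t₂) (hF0 x)
          simpa using this
        · rw [hθ2 _ h, ← mul_neg]
          exact mul_le_mul_of_nonneg_left (abs_le.1 (herr x h)).1 (hθ0 _)
      have hA : η (‖x‖ ^ 2) * (a * w x ^ 2 - ‖x‖ ^ 2 * gradSq w x) ≤
          η (‖x‖ ^ 2) / α (‖x‖ ^ 2) * χ (‖x‖ ^ 2) * pohozaevFlux α β γ w x := by
        rcases hx1.eq_or_lt with h1 | h1
        · rw [← h1]; simp [hη₁ t₁ le_rfl]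
        rcases lt_or_ge (‖x‖ ^ 2) t₂ with h | h
        · rw [hχ1 _ h.le, mul_one]
          calc _ = η (‖x‖ ^ 2) / α (‖x‖ ^ 2) *
                (α (‖x‖ ^ 2) * (a * w x ^ 2 - ‖x‖ ^ 2 * gradSq w x)) := by field_simp
            _ ≤ _ := mul_le_mul_of_nonneg_left (hflux x h1 h) (div_nonneg (hη0 _) hαp.le)
        · simp [hη₂ _ h]
      linarith
  have := integral_mono ((hJ.const_mul 2).sub ((hF.const_mul (θ t₂)).const_mul 2)) hI hpt
  simp only [Pi.sub_apply] at this
  rw [hI0, integral_sub (hJ.const_mul 2) ((hF.const_mul (θ t₂)).const_mul 2),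
    integral_const_mul, integral_const_mul, integral_const_mul] at this
  linarith

/-- A continuous bump, positive exactly on `(t₁, t₂)`. -/
def tentBump (t₁ t₂ t : ℝ) : ℝ := max 0 ((t - t₁) * (t₂ - t))

lemma continuous_tentBump (t₁ t₂ : ℝ) : Continuous (tentBump t₁ t₂) := by
  unfold tentBump; fun_prop

lemma tentBump_nonneg (t₁ t₂ t : ℝ) : 0 ≤ tentBump t₁ t₂ t := le_max_left _ _

lemma tentBump_of_le_left {t₁ t₂ t : ℝ} (h : t₁ ≤ t₂) (ht : t ≤ t₁) : tentBump t₁ t₂ t = 0 :=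
  max_eq_left (mul_nonpos_of_nonpos_of_nonneg (by linarith) (by linarith))

lemma tentBump_of_right_le {t₁ t₂ t : ℝ} (h : t₁ ≤ t₂) (ht : t₂ ≤ t) : tentBump t₁ t₂ t = 0 :=
  max_eq_left (mul_nonpos_of_nonneg_of_nonpos (by linarith) (by linarith))

lemma tentBump_pos {t₁ t₂ t : ℝ} (h₁ : t₁ < t) (h₂ : t < t₂) : 0 < tentBump t₁ t₂ t :=
  lt_max_of_lt_right (mul_pos (by linarith) (by linarith))

lemma gradSq_nonneg {d : ℕ} (w : Euc d → ℝ) (x : Euc d) : 0 ≤ gradSq w x :=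
  Finset.sum_nonneg fun _ _ => sq_nonneg _

lemma euler_sq_le {d : ℕ} (w : Euc d → ℝ) (x : Euc d) :
    euler w x ^ 2 ≤ ‖x‖ ^ 2 * gradSq w x := by
  have h := Finset.sum_mul_sq_le_sq_mul_sq Finset.univ (fun i => x i) (fun i => pd w i x)
  rw [EuclideanSpace.norm_sq_eq]
  simpa [euler, gradSq] using h

/-- If the averaged flux is nonpositive for arbitrarily large parameters, the function vanishes. -/
lemma eq_zero_of_integral_tentBump_nonpos {d : ℕ} {w : Euc d → ℝ} (hw : ContDiff ℝ 2 w)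
    {t₁ t₂ : ℝ} (ht : t₁ ≤ t₂)
    (h : ∀ A : ℝ, ∃ a ≥ A, ∫ x : Euc d, tentBump t₁ t₂ (‖x‖ ^ 2) *
      (a * w x ^ 2 - ‖x‖ ^ 2 * gradSq w x) ≤ 0)
    (x : Euc d) (h₁ : t₁ < ‖x‖ ^ 2) (h₂ : ‖x‖ ^ 2 < t₂) : w x = 0 := by
  have hc := continuous_tentBump t₁ t₂
  have hwc := hw.continuous
  have hgc := (contDiff_gradSq hw).continuous
  set f : Euc d → ℝ := fun x => tentBump t₁ t₂ (‖x‖ ^ 2) * w x ^ 2 with hf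
  set g : Euc d → ℝ := fun x => tentBump t₁ t₂ (‖x‖ ^ 2) * (‖x‖ ^ 2 * gradSq w x) with hg
  have hfc : Continuous f := by fun_prop
  have hgc' : Continuous g := by fun_prop
  have hfi : Integrable f := hfc.integrable_of_hasCompactSupport
    (hasCompactSupport_of_norm (T := t₂) fun x hx => by simp [hf, tentBump_of_right_le ht hx.le])
  have hgi : Integrable g := hgc'.integrable_of_hasCompactSupport
    (hasCompactSupport_of_norm (T := t₂) fun x hx => by simp [hg, tentBump_of_right_le ht hx.le])
  have hf0 : ∀ x, 0 ≤ f x := fun x => mul_nonneg (tentBump_nonneg _ _ _) (sq_nonneg _)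
  have key : ∀ A : ℝ, ∃ a ≥ A, a * ∫ x, f x ≤ ∫ x, g x := by
    intro A
    obtain ⟨a, ha, hle⟩ := h A
    refine ⟨a, ha, ?_⟩
    have : (fun x : Euc d => tentBump t₁ t₂ (‖x‖ ^ 2) *
      (a * w x ^ 2 - ‖x‖ ^ 2 * gradSq w x)) = fun x => a * f x - g x := by
      funext x; simp only [hf, hg]; ring
    rw [this, integral_sub (hfi.const_mul a) hgi, integral_const_mul] at hle
    linarith
  have hzero : ∫ x, f x = 0 := by
    by_contra hne
    have hpos : 0 < ∫ x, f x := lt_of_le_of_ne (integral_nonneg hf0) (Ne.symm hne)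
    obtain ⟨a, ha, hle⟩ := key ((∫ x, g x) / (∫ x, f x) + 1)
    have h3 : (∫ x, g x) / (∫ x, f x) * (∫ x, f x) = ∫ x, g x := div_mul_cancel₀ _ hne
    nlinarith
  have hae := (integral_eq_zero_iff_of_nonneg hf0 hfi).1 hzero
  have hfun : f = 0 := (hfc.ae_eq_iff_eq volume continuous_const).1 hae
  have hx : f x = 0 := congrFun hfun x
  have hp := tentBump_pos h₁ h₂
  simpa [hf, hp.ne'] using hx

/-- The outer cutoff: `1` for `t ≤ T - 1` and `0` for `t ≥ T`. -/
def outerCutoff (T t : ℝ) : ℝ := Real.smoothTransition (T - t)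

lemma contDiff_outerCutoff (T : ℝ) : ContDiff ℝ 1 (outerCutoff T) :=
  Real.smoothTransition.contDiff.comp (contDiff_const.sub contDiff_id)

lemma outerCutoff_nonneg (T t : ℝ) : 0 ≤ outerCutoff T t := Real.smoothTransition.nonneg _

lemma outerCutoff_of_le {T t : ℝ} (h : t ≤ T - 1) : outerCutoff T t = 1 :=
  Real.smoothTransition.one_of_one_le (by linarith)

lemma outerCutoff_of_ge {T t : ℝ} (h : T ≤ t) : outerCutoff T t = 0 :=
  Real.smoothTransition.zero_of_nonpos (by linarith)

set_option maxHeartbeats 1000000 in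
/-- Unique continuation from outside a ball for `|Δw| ≲ |∇w| + |w|`. -/
lemma eq_zero_of_lap_sq_le {d : ℕ} (hd : 1 ≤ d) {w : Euc d → ℝ} (hw : ContDiff ℝ 2 w)
    {t₀ t₁ t₂ C : ℝ} (ht₀ : 0 < t₀) (hw0 : ∀ x, ‖x‖ ^ 2 < t₀ → w x = 0) (ht₁ : 0 < t₁)
    (hC : 1 ≤ C) (hlap : ∀ x, t₁ < ‖x‖ ^ 2 → lap w x ^ 2 ≤ C * (gradSq w x + w x ^ 2))
    (hout : ∀ x, t₂ ≤ ‖x‖ ^ 2 → w x = 0) (x : Euc d) (hx : t₁ < ‖x‖ ^ 2) : w x = 0 := by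
  rcases le_or_gt t₂ (‖x‖ ^ 2) with h2 | h2
  · exact hout x h2
  have ht₁₂ : t₁ ≤ t₂ := (hx.trans h2).le
  have hd' : (1 : ℝ) ≤ d := by exact_mod_cast hd
  refine eq_zero_of_integral_tentBump_nonpos hw (t₁ := t₁) (t₂ := t₂ + 1) (by linarith)
    (fun A => ?_) x hx (by linarith)
  set B : ℝ := d * (d + 1) + 1 + C * (d - 1) ^ 2 with hB
  have hB1 : 1 ≤ B := by
    have : 0 ≤ C * ((d : ℝ) - 1) ^ 2 := by positivity
    have : (0 : ℝ) ≤ d * (d + 1) := by positivity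
    linarith
  obtain ⟨τ, hτC, hτB, hτA⟩ : ∃ τ : ℝ, C ≤ τ ∧ B ≤ τ * t₁ ∧ A ≤ τ * t₁ := by
    refine ⟨max C (max (B / t₁) (A / t₁)), le_max_left _ _, ?_, ?_⟩
    · rw [← div_le_iff₀ ht₁]; exact (le_max_left _ _).trans (le_max_right _ _)
    · rw [← div_le_iff₀ ht₁]; exact (le_max_right _ _).trans (le_max_right _ _)
  refine ⟨τ * t₁, hτA, ?_⟩
  have hτ1 : 1 ≤ τ := hC.trans hτC
  have hexp : ∀ t, HasDerivAt (fun t : ℝ => Real.exp (τ * t)) (τ * Real.exp (τ * t)) t := fun t => by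
    have := ((hasDerivAt_id t).const_mul τ).exp
    simpa [mul_comm] using this
  set α : ℝ → ℝ := fun t => Real.exp (τ * t) with hα
  set β : ℝ → ℝ := fun t => Real.exp (τ * t) * (2 * τ * t + (d - 1)) with hβ
  set γ : ℝ → ℝ := fun t => Real.exp (τ * t) * (2 * τ ^ 2 * t - (d + 1) * τ) with hγ
  have hα' : ∀ t, deriv α t = τ * Real.exp (τ * t) := fun t => (hexp t).deriv
  have hβ' : ∀ t, deriv β t = Real.exp (τ * t) * (τ * (2 * τ * t + (d - 1)) + 2 * τ) := fun t => by
    have h1 : HasDerivAt (fun t : ℝ => 2 * τ * t + ((d : ℝ) - 1)) (2 * τ) t := by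
      simpa using ((hasDerivAt_id t).const_mul (2 * τ)).add_const ((d : ℝ) - 1)
    refine ((hexp t).mul h1).deriv.trans ?_
    ring
  have hγ' : ∀ t, deriv γ t =
      Real.exp (τ * t) * (τ * (2 * τ ^ 2 * t - (d + 1) * τ) + 2 * τ ^ 2) := fun t => by
    have h1 : HasDerivAt (fun t : ℝ => 2 * τ ^ 2 * t - ((d : ℝ) + 1) * τ) (2 * τ ^ 2) t := by
      simpa using ((hasDerivAt_id t).const_mul (2 * τ ^ 2)).sub_const (((d : ℝ) + 1) * τ)
    refine ((hexp t).mul h1).deriv.trans ?_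
    ring
  have hlocal : ∀ x : Euc d, t₂ + 1 ≤ ‖x‖ ^ 2 → pohozaevFlux α β γ w x = 0 := by
    intro x hx
    have hev : w =ᶠ[nhds x] fun _ => 0 := by
      have hopen : IsOpen {y : Euc d | t₂ < ‖y‖ ^ 2} := isOpen_lt continuous_const (by fun_prop)
      filter_upwards [hopen.mem_nhds (show t₂ < ‖x‖ ^ 2 by linarith)] with y hy
        using hout y (le_of_lt hy)
    have hp : ∀ i, pd w i x = 0 := fun i => by rw [pd_congr hev]; simp [pd]
    simp [pohozaevFlux, hp, gradSq, euler, hev.eq_of_nhds]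
  have hmain := carleman_inequality (α := α) (β := β) (γ := γ) (η := tentBump t₁ (t₂ + 1))
    (χ := outerCutoff (t₂ + 2)) (t₁ := t₁) (t₂ := t₂ + 1) (T := t₂ + 2) (a := τ * t₁)
    (F := fun _ => 0) hw ht₁
    (by linarith) ht₀ hw0 (by fun_prop) (by fun_prop) (by fun_prop) (fun t _ => Real.exp_pos _)
    (continuous_tentBump _ _) (tentBump_nonneg _ _)
    (fun t ht => tentBump_of_le_left (by linarith) ht)
    (fun t ht => tentBump_of_right_le (by linarith) ht)
    (contDiff_outerCutoff _) (outerCutoff_nonneg _)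
    (fun t ht => outerCutoff_of_le (by linarith)) (fun t ht => outerCutoff_of_ge ht.le)
    ?_ ?_ (by simp) (by simp) (fun x hx => by rw [hlocal x hx]; simp)
  · simpa using hmain
  · intro x hx
    have hl := hlap x hx
    have hG := gradSq_nonneg w x
    simp only [pohozaevDiv, hα', hβ', hγ']
    simp only [hα, hβ, hγ]
    generalize gradSq w x = G at *
    generalize lap w x = L at *
    generalize euler w x = N at *
    generalize w x = v at *
    generalize ‖x‖ ^ 2 = t at *
    have e : G * ((2 - d) * Real.exp (τ * t) - 2 * t * (τ * Real.exp (τ * t)) +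
          Real.exp (τ * t) * (2 * τ * t + (d - 1))) + 4 * (τ * Real.exp (τ * t)) * N ^ 2 +
          (2 * Real.exp (τ * t) * N + Real.exp (τ * t) * (2 * τ * t + (d - 1)) * v) * L +
          v * N * (2 * (Real.exp (τ * t) * (τ * (2 * τ * t + (d - 1)) + 2 * τ)) +
            2 * (Real.exp (τ * t) * (2 * τ ^ 2 * t - (d + 1) * τ))) +
        v ^ 2 * (d * (Real.exp (τ * t) * (2 * τ ^ 2 * t - (d + 1) * τ)) +
            2 * t * (Real.exp (τ * t) * (τ * (2 * τ ^ 2 * t - (d + 1) * τ) + 2 * τ ^ 2)))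
        = Real.exp (τ * t) * (G + 4 * τ * (N + τ * t * v) ^ 2
          + (2 * τ ^ 2 * t - d * (d + 1) * τ) * v ^ 2
          + L * (2 * (N + τ * t * v) + (d - 1) * v)) := by ring
    rw [e]
    refine mul_nonneg (Real.exp_pos _).le ?_
    generalize N + τ * t * v = Z
    have hY : -(1 / 2 * (G + v ^ 2) + C * (4 * Z ^ 2 + (d - 1) ^ 2 * v ^ 2)) ≤
        L * (2 * Z + (d - 1) * v) := by
      have h1 : L ^ 2 / C ≤ G + v ^ 2 := by
        rw [div_le_iff₀ (by linarith)]; linarith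
      have h2 : 0 ≤ (L + C * (2 * Z + (d - 1) * v)) ^ 2 / C := by positivity
      have h3 : (L + C * (2 * Z + (d - 1) * v)) ^ 2 / C =
          L ^ 2 / C + 2 * (L * (2 * Z + (d - 1) * v)) + C * (2 * Z + (d - 1) * v) ^ 2 := by
        field_simp; ring
      have h4 : 0 ≤ C * (2 * Z - (d - 1) * v) ^ 2 := by positivity
      nlinarith
    have hcoef : 1 + C * (d - 1) ^ 2 ≤ 2 * τ ^ 2 * t - d * (d + 1) * τ := by
      have h1 : τ * t₁ ≤ τ * t := mul_le_mul_of_nonneg_left hx.le (by linarith)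
      have h2 : 1 + C * (d - 1) ^ 2 ≤ 2 * (τ * t) - d * (d + 1) := by
        have : B ≤ τ * t := hτB.trans h1
        have : 1 ≤ τ * t := hB1.trans this
        have h6 : (0 : ℝ) ≤ d * (d + 1) := by positivity
        have : (d : ℝ) * (d + 1) + 1 + C * (d - 1) ^ 2 ≤ τ * t := by linarith
        linarith
      have h3 : (0 : ℝ) ≤ 1 + C * (d - 1) ^ 2 := by positivity
      nlinarith
    have h5 := mul_le_mul_of_nonneg_right hcoef (sq_nonneg v)
    have h6 := mul_le_mul_of_nonneg_right hτC (sq_nonneg Z)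
    nlinarith [sq_nonneg v]
  · intro x hx _
    simp only [pohozaevFlux, hα, hβ, hγ]
    generalize gradSq w x = G at *
    generalize euler w x = N at *
    generalize w x = v at *
    generalize ‖x‖ ^ 2 = t at *
    have e : Real.exp (τ * t) * (2 * N ^ 2 - t * G) +
        Real.exp (τ * t) * (2 * τ * t + (d - 1)) * (v * N) +
        Real.exp (τ * t) * (2 * τ ^ 2 * t - (d + 1) * τ) * (t * v ^ 2) =
        Real.exp (τ * t) * (2 * N ^ 2 + (2 * (τ * t) + (d - 1)) * (v * N)
          + (2 * (τ * t) ^ 2 - (d + 1) * (τ * t)) * v ^ 2 - t * G) := by ring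
    rw [e]
    refine mul_le_mul_of_nonneg_left ?_ (Real.exp_pos _).le
    have h1 : τ * t₁ ≤ τ * t := mul_le_mul_of_nonneg_left hx.le (by linarith)
    generalize τ * t = y at *
    have hyB : B ≤ y := hτB.trans h1
    have h2 : y ≤ y ^ 2 - (d + 1) * y - (d - 1) ^ 2 / 4 := by
      have h3 : (d - 1 : ℝ) ^ 2 ≤ C * (d - 1) ^ 2 := le_mul_of_one_le_left (sq_nonneg _) hC
      have h4 : (d + 2 : ℝ) + (d - 1) ^ 2 / 4 ≤ y := by nlinarith
      have h5 : 1 ≤ y := hB1.trans hyB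
      nlinarith [sq_nonneg ((d : ℝ) - 1)]
    have h3 : 0 ≤ 2 * (N + (2 * y + (d - 1)) / 4 * v) ^ 2 := by positivity
    have h4 : (2 * y + (d - 1)) ^ 2 / 8 ≤ y ^ 2 + (d - 1) ^ 2 / 4 := by
      nlinarith [sq_nonneg (2 * y - (d - 1))]
    have h5 := mul_le_mul_of_nonneg_right (show τ * t₁ ≤ 2 * y ^ 2 - (d + 1) * y
      - (2 * y + (d - 1)) ^ 2 / 8 by linarith) (sq_nonneg v)
    nlinarith

/-- The Carleman weight `|x|^(2c) e^(2κ|x|)`, as a function of `|x|²`. -/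
def expWeight (c : ℕ) (κ t : ℝ) : ℝ := t ^ c * Real.exp (2 * κ * √t)

/-- Half the logarithmic derivative of `expWeight` in `log |x|`. -/
def expRate (c : ℕ) (κ t : ℝ) : ℝ := c + κ * √t

/-- The weight of `w∇w` accompanying `expWeight`. -/
def expWeightMid (d c : ℕ) (κ t : ℝ) : ℝ := expWeight c κ t * (2 * expRate c κ t + d - 2)

/-- The weight of `w² x` accompanying `expWeight` for the equation `Δw = kw`. -/
def expWeightLow (d c : ℕ) (κ k t : ℝ) : ℝ := expWeight c κ t *
  ((expRate c κ t * (2 * expRate c κ t + d - 2) - κ * √t - k * t) / t)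

lemma expWeight_pos (c : ℕ) (κ : ℝ) {t : ℝ} (ht : 0 < t) : 0 < expWeight c κ t := by
  unfold expWeight; positivity

lemma contDiffOn_sqrt_Ioi : ContDiffOn ℝ 1 (fun t : ℝ => √t) (Ioi 0) := fun _ ht =>
  (Real.contDiffAt_sqrt (ne_of_gt ht)).contDiffWithinAt

lemma contDiffOn_expWeight (c : ℕ) (κ : ℝ) : ContDiffOn ℝ 1 (expWeight c κ) (Ioi 0) := by
  have := contDiffOn_sqrt_Ioi
  unfold expWeight; fun_prop

lemma contDiffOn_expRate (c : ℕ) (κ : ℝ) : ContDiffOn ℝ 1 (expRate c κ) (Ioi 0) := by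
  have := contDiffOn_sqrt_Ioi
  unfold expRate; fun_prop

lemma contDiffOn_expWeightMid (d c : ℕ) (κ : ℝ) :
    ContDiffOn ℝ 1 (expWeightMid d c κ) (Ioi 0) := by
  have := contDiffOn_expWeight c κ
  have := contDiffOn_expRate c κ
  unfold expWeightMid; fun_prop

lemma contDiffOn_expWeightLow (d c : ℕ) (κ k : ℝ) :
    ContDiffOn ℝ 1 (expWeightLow d c κ k) (Ioi 0) := by
  have h1 := contDiffOn_expWeight c κ
  have h2 := contDiffOn_expRate c κ
  have h3 := contDiffOn_sqrt_Ioi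
  unfold expWeightLow
  refine h1.mul (ContDiffOn.div ?_ contDiffOn_id fun t ht => ne_of_gt ht)
  fun_prop

lemma hasDerivAt_expRate (c : ℕ) (κ : ℝ) {t : ℝ} (ht : 0 < t) :
    HasDerivAt (expRate c κ) (κ / (2 * √t)) t := by
  have h : HasDerivAt (expRate c κ) _ t :=
    ((Real.hasDerivAt_sqrt ht.ne').const_mul κ).const_add (c : ℝ)
  exact h.congr_deriv (by ring)

lemma hasDerivAt_expWeight {c : ℕ} (hc : 1 ≤ c) (κ : ℝ) {t : ℝ} (ht : 0 < t) :
    HasDerivAt (expWeight c κ) (expWeight c κ t * expRate c κ t / t) t := by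
  have h1 := ((Real.hasDerivAt_sqrt ht.ne').const_mul (2 * κ)).exp
  have h : HasDerivAt (expWeight c κ) _ t := (hasDerivAt_pow c t).mul h1
  refine h.congr_deriv ?_
  have hs : 0 < √t := Real.sqrt_pos.2 ht
  have hsq : t = √t ^ 2 := (Real.sq_sqrt ht.le).symm
  obtain ⟨m, rfl⟩ : ∃ m, c = m + 1 := ⟨c - 1, by omega⟩
  simp only [expWeight, expRate, Nat.add_sub_cancel]
  generalize √t = s at *
  subst hsq
  field_simp
  push_cast
  ring

lemma hasDerivAt_expWeightMid {c : ℕ} (d : ℕ) (hc : 1 ≤ c) (κ : ℝ) {t : ℝ} (ht : 0 < t) :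
    HasDerivAt (expWeightMid d c κ) (expWeight c κ t / t *
      (expRate c κ t * (2 * expRate c κ t + d - 2) + κ * √t)) t := by
  have h : HasDerivAt (expWeightMid d c κ) _ t := (hasDerivAt_expWeight hc κ ht).mul
    ((((hasDerivAt_expRate c κ ht).const_mul 2).add_const (d : ℝ)).sub_const 2)
  refine h.congr_deriv ?_
  have hs : 0 < √t := Real.sqrt_pos.2 ht
  have hsq : t = √t ^ 2 := (Real.sq_sqrt ht.le).symm
  generalize expWeight c κ t = A
  generalize expRate c κ t = p
  generalize √t = s at *
  subst hsq
  field_simp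

lemma hasDerivAt_expWeightLow {c : ℕ} (d : ℕ) (hc : 1 ≤ c) (κ k : ℝ) {t : ℝ} (ht : 0 < t) :
    HasDerivAt (expWeightLow d c κ k) (expWeight c κ t / t ^ 2 *
      ((expRate c κ t - 1) * (expRate c κ t * (2 * expRate c κ t + d - 2) - κ * √t - k * t)
        + κ * √t / 2 * (2 * expRate c κ t + d - 2) + expRate c κ t * κ * √t
        - κ * √t / 2 - k * t)) t := by
  have hp := hasDerivAt_expRate c κ ht
  have hb := ((hp.const_mul 2).add_const (d : ℝ)).sub_const 2
  have hg := ((hp.mul hb).sub ((Real.hasDerivAt_sqrt ht.ne').const_mul κ)).sub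
    ((hasDerivAt_id t).const_mul k)
  have h : HasDerivAt (expWeightLow d c κ k) _ t :=
    (hasDerivAt_expWeight hc κ ht).mul (hg.div (hasDerivAt_id t) ht.ne')
  refine h.congr_deriv ?_
  have hs : 0 < √t := Real.sqrt_pos.2 ht
  have hsq : t = √t ^ 2 := (Real.sq_sqrt ht.le).symm
  simp only [Pi.mul_apply, Pi.sub_apply, id]
  generalize expWeight c κ t = A
  generalize expRate c κ t = p
  generalize √t = s at *
  subst hsq
  field_simp
  ring

lemma pohozaevDiv_expWeight_nonneg {d c : ℕ} (hc : 1 ≤ c) {κ k : ℝ} (hκ : 0 < κ)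
    (hk : k ≤ κ ^ 2) {w : Euc d → ℝ} {x : Euc d} (hx : 0 < ‖x‖ ^ 2) (hlap : lap w x = k * w x) :
    0 ≤ pohozaevDiv (expWeight c κ) (expWeightMid d c κ) (expWeightLow d c κ k) w x := by
  have hA := expWeight_pos c κ hx
  have hc' : (1 : ℝ) ≤ c := by exact_mod_cast hc
  simp only [pohozaevDiv, (hasDerivAt_expWeight hc κ hx).deriv,
    (hasDerivAt_expWeightMid d hc κ hx).deriv, (hasDerivAt_expWeightLow d hc κ k hx).deriv, hlap]
  simp only [expWeightMid, expWeightLow]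
  have hp : expRate c κ (‖x‖ ^ 2) = c + κ * √(‖x‖ ^ 2) := rfl
  have hs : 0 < √(‖x‖ ^ 2) := Real.sqrt_pos.2 hx
  have hsq : ‖x‖ ^ 2 = √(‖x‖ ^ 2) ^ 2 := (Real.sq_sqrt hx.le).symm
  generalize expWeight c κ (‖x‖ ^ 2) = A at *
  generalize expRate c κ (‖x‖ ^ 2) = p at *
  generalize √(‖x‖ ^ 2) = s at *
  generalize ‖x‖ ^ 2 = t at *
  subst hsq
  generalize gradSq w x = G
  generalize euler w x = N
  generalize w x = v
  have h1 : 0 ≤ A / s ^ 2 * (4 * p * (N + (2 * p + d - 2) / 2 * v) ^ 2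
      + (2 * p * (κ * s) - κ * s - 2 * k * s ^ 2) * v ^ 2) := by
    have hp0 : 0 ≤ p := by rw [hp]; positivity
    have h2 : 0 ≤ 2 * p * (κ * s) - κ * s - 2 * k * s ^ 2 := by
      have := mul_le_mul_of_nonneg_right hk (sq_nonneg s)
      have h3 : κ * s ≤ c * (κ * s) := le_mul_of_one_le_left (by positivity) hc'
      have h4 : 0 < κ * s := by positivity
      rw [hp]; nlinarith
    positivity
  refine h1.trans_eq ?_
  field_simp
  ring

lemma le_pohozaevFlux_expWeight {d c : ℕ} (hc : 1 ≤ c) (hdc : d ≤ c) {κ k : ℝ} (hd : 2 ≤ d)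
    (hκ : 0 < κ) (hk : k ≤ κ ^ 2) {w : Euc d → ℝ} {x : Euc d} (hx : 0 < ‖x‖ ^ 2) :
    expWeight c κ (‖x‖ ^ 2) * (c * w x ^ 2 - ‖x‖ ^ 2 * gradSq w x) ≤
      pohozaevFlux (expWeight c κ) (expWeightMid d c κ) (expWeightLow d c κ k) w x := by
  have hA := expWeight_pos c κ hx
  have hc' : (1 : ℝ) ≤ c := by exact_mod_cast hc
  have hdc' : (d : ℝ) ≤ c := by exact_mod_cast hdc
  have hd' : (2 : ℝ) ≤ d := by exact_mod_cast hd
  simp only [pohozaevFlux, expWeightMid, expWeightLow]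
  have hp : expRate c κ (‖x‖ ^ 2) = c + κ * √(‖x‖ ^ 2) := rfl
  have hs : 0 < √(‖x‖ ^ 2) := Real.sqrt_pos.2 hx
  have hsq : ‖x‖ ^ 2 = √(‖x‖ ^ 2) ^ 2 := (Real.sq_sqrt hx.le).symm
  generalize expWeight c κ (‖x‖ ^ 2) = A at *
  generalize expRate c κ (‖x‖ ^ 2) = p at *
  generalize √(‖x‖ ^ 2) = s at *
  generalize ‖x‖ ^ 2 = t at *
  subst hsq
  generalize gradSq w x = G
  generalize euler w x = N
  generalize w x = v
  have e : A * (2 * N ^ 2 - s ^ 2 * G) + A * (2 * p + d - 2) * (v * N) +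
      A * ((p * (2 * p + d - 2) - κ * s - k * s ^ 2) / s ^ 2) * (s ^ 2 * v ^ 2) =
      A * (2 * (N + (2 * p + d - 2) / 4 * v) ^ 2 + (p * (2 * p + d - 2) - κ * s - k * s ^ 2
        - (2 * p + d - 2) ^ 2 / 8) * v ^ 2 - s ^ 2 * G) := by
    field_simp; ring
  rw [e]
  refine mul_le_mul_of_nonneg_left ?_ hA.le
  have h0 : 0 < κ * s := by positivity
  have h1 : (c : ℝ) ≤ p ^ 2 - κ * s - k * s ^ 2 := by
    have := mul_le_mul_of_nonneg_right hk (sq_nonneg s)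
    have h3 : κ * s ≤ c * (κ * s) := le_mul_of_one_le_left h0.le hc'
    have h4 : (c : ℝ) ≤ c * c := le_mul_of_one_le_left (by linarith) hc'
    rw [hp]; nlinarith
  have h2 : p ^ 2 ≤ p * (2 * p + d - 2) - (2 * p + d - 2) ^ 2 / 8 := by
    have h3 : (d : ℝ) - 2 ≤ p := by rw [hp]; linarith
    nlinarith [mul_nonneg (sub_nonneg.2 hd') (sub_nonneg.2 h3), sq_nonneg p]
  have h3 := mul_le_mul_of_nonneg_right (show (c : ℝ) ≤ p * (2 * p + d - 2) - κ * s - k * s ^ 2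
        - (2 * p + d - 2) ^ 2 / 8 by linarith) (sq_nonneg v)
  nlinarith [sq_nonneg (N + (2 * p + d - 2) / 4 * v)]

lemma abs_pohozaevFlux_expWeight_le {d c : ℕ} {κ k R : ℝ} (hd : 2 ≤ d) (hκ : 0 < κ)
    {w : Euc d → ℝ} {x : Euc d} (hx : 0 < ‖x‖) (hR : 1 ≤ R) (hxR : ‖x‖ ≤ R) :
    |pohozaevFlux (expWeight c κ) (expWeightMid d c κ) (expWeightLow d c κ k) w x| ≤
      R ^ (2 * c) * Real.exp (2 * κ * R) * ((4 + 2 * (2 * c + 2 * κ + d) ^ 2 + κ + |k|) * R ^ 2) *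
        (gradSq w x + w x ^ 2) := by
  have hA : expWeight c κ (‖x‖ ^ 2) ≤ R ^ (2 * c) * Real.exp (2 * κ * R) := by
    rw [expWeight, Real.sqrt_sq hx.le, ← pow_mul]
    gcongr
  have hA0 := expWeight_pos c κ (pow_pos hx 2)
  have hd' : (2 : ℝ) ≤ d := by exact_mod_cast hd
  have hN := euler_sq_le w x
  have hG := gradSq_nonneg w x
  have hp : expRate c κ (‖x‖ ^ 2) = c + κ * ‖x‖ := by rw [expRate, Real.sqrt_sq hx.le]
  simp only [pohozaevFlux, expWeightMid, expWeightLow, Real.sqrt_sq hx.le]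
  generalize expWeight c κ (‖x‖ ^ 2) = A at *
  generalize expRate c κ (‖x‖ ^ 2) = p at *
  generalize ‖x‖ = s at *
  generalize gradSq w x = G at *
  generalize euler w x = N at *
  generalize w x = v at *
  have e : A * (2 * N ^ 2 - s ^ 2 * G) + A * (2 * p + d - 2) * (v * N) +
      A * ((p * (2 * p + d - 2) - κ * s - k * s ^ 2) / s ^ 2) * (s ^ 2 * v ^ 2) =
      A * (2 * N ^ 2 - s ^ 2 * G + (2 * p + d - 2) * (v * N)
        + (p * (2 * p + d - 2) - κ * s - k * s ^ 2) * v ^ 2) := by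
    field_simp
  rw [e, abs_mul, abs_of_pos hA0, mul_assoc (_ * _)]
  refine mul_le_mul hA ?_ (abs_nonneg _) (by positivity)
  have hc0 : (0 : ℝ) ≤ c := Nat.cast_nonneg c
  set B : ℝ := 2 * c + 2 * κ + d with hB
  have hκs : κ * s ≤ κ * R := by gcongr
  have hp0 : 0 ≤ p := by rw [hp]; positivity
  have hb0 : 0 ≤ 2 * p + d - 2 := by linarith
  have hb : 2 * p + d - 2 ≤ B * R := by
    rw [hp, hB]
    nlinarith
  have hpB : p ≤ B * R := by linarith
  have hsR : s ^ 2 ≤ R ^ 2 := by gcongr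
  have hRR : R ≤ R ^ 2 := by nlinarith
  generalize 2 * p + (d : ℝ) - 2 = q at *
  have hpq : p * q ≤ B ^ 2 * R ^ 2 := by
    calc p * q ≤ (B * R) * (B * R) := by gcongr
      _ = _ := by ring
  have hqq : q ^ 2 ≤ B ^ 2 * R ^ 2 := by
    calc q ^ 2 ≤ (B * R) ^ 2 := by gcongr
      _ = _ := by ring
  have hg : |p * q - κ * s - k * s ^ 2| ≤ (B ^ 2 + κ + |k|) * R ^ 2 := by
    have h1 : |k * s ^ 2| ≤ |k| * R ^ 2 := by
      rw [abs_mul, abs_of_nonneg (sq_nonneg s)]; gcongr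
    have h2 := abs_le.1 h1
    have h3 : 0 ≤ p * q := by positivity
    have h4 : κ * s ≤ κ * R ^ 2 := hκs.trans (by gcongr)
    have h5 : 0 < κ * s := by positivity
    have h6 : 0 ≤ B ^ 2 * R ^ 2 := by positivity
    rw [abs_le]; constructor <;> linarith
  have hg' : |(p * q - κ * s - k * s ^ 2) * v ^ 2| ≤ (B ^ 2 + κ + |k|) * R ^ 2 * v ^ 2 := by
    rw [abs_mul, abs_of_nonneg (sq_nonneg v)]; gcongr
  have h1 : |2 * N ^ 2 - s ^ 2 * G| ≤ R ^ 2 * G := by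
    have := mul_le_mul_of_nonneg_right hsR hG
    have h0 := sq_nonneg N
    rw [abs_le]; constructor <;> linarith
  have h2 : |q * (v * N)| ≤ B ^ 2 * R ^ 2 * v ^ 2 + R ^ 2 * G := by
    have h3 := mul_le_mul_of_nonneg_right hqq (sq_nonneg v)
    have h4 := mul_le_mul_of_nonneg_right hsR hG
    have h5 := sq_nonneg (q * v + N)
    have h6 := sq_nonneg (q * v - N)
    have h7 := sq_nonneg (q * v)
    rw [abs_le]; constructor <;> linarith
  have h3 := abs_add_le (2 * N ^ 2 - s ^ 2 * G + q * (v * N)) ((p * q - κ * s - k * s ^ 2) * v ^ 2)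
  have h4 := abs_add_le (2 * N ^ 2 - s ^ 2 * G) (q * (v * N))
  have h5 : 0 ≤ (2 + 2 * B ^ 2 + κ + |k|) * (R ^ 2 * G) := by positivity
  have h6 : 0 ≤ 4 * (R ^ 2 * v ^ 2) := by positivity
  linarith

/-- A smooth bump, `1` on `[-1, 1]` and `0` outside `(-2, 2)`. -/
def shellBump (s : ℝ) : ℝ := Real.smoothTransition (2 + s) * Real.smoothTransition (2 - s)

lemma contDiff_shellBump : ContDiff ℝ 3 shellBump := by
  unfold shellBump
  exact (Real.smoothTransition.contDiff.comp (contDiff_const.add contDiff_id)).mul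
    (Real.smoothTransition.contDiff.comp (contDiff_const.sub contDiff_id))

lemma shellBump_nonneg (s : ℝ) : 0 ≤ shellBump s :=
  mul_nonneg (Real.smoothTransition.nonneg _) (Real.smoothTransition.nonneg _)

lemma shellBump_le_one (s : ℝ) : shellBump s ≤ 1 :=
  mul_le_one₀ (Real.smoothTransition.le_one _) (Real.smoothTransition.nonneg _)
    (Real.smoothTransition.le_one _)

lemma shellBump_eq_one {s : ℝ} (h₁ : -1 ≤ s) (h₂ : s ≤ 1) : shellBump s = 1 := by
  rw [shellBump, Real.smoothTransition.one_of_one_le (by linarith),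
    Real.smoothTransition.one_of_one_le (by linarith), one_mul]

lemma shellBump_eq_zero {s : ℝ} (h : 2 < |s|) : shellBump s = 0 := by
  rcases lt_abs.1 h with h | h
  · rw [shellBump, Real.smoothTransition.zero_of_nonpos (show 2 - s ≤ 0 by linarith), mul_zero]
  · rw [shellBump, Real.smoothTransition.zero_of_nonpos (show 2 + s ≤ 0 by linarith), zero_mul]

lemma deriv_eq_zero_of_two_lt_abs {f : ℝ → ℝ} (hf : ∀ s, 2 < |s| → f s = 0) {s : ℝ}
    (hs : 2 < |s|) : deriv f s = 0 := by
  have : f =ᶠ[nhds s] fun _ => 0 := by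
    filter_upwards [(isOpen_lt continuous_const continuous_abs).mem_nhds hs] with y hy using hf y hy
  rw [this.deriv_eq]; simp

lemma exists_abs_le_of_two_lt_abs {f : ℝ → ℝ} (hc : Continuous f)
    (hf : ∀ s, 2 < |s| → f s = 0) : ∃ D, 0 ≤ D ∧ ∀ s, |f s| ≤ D := by
  have hs : HasCompactSupport f := HasCompactSupport.intro (isCompact_Icc (a := (-2 : ℝ)) (b := 2))
    fun s hs => hf s (by
      by_contra h
      exact hs (abs_le.1 (not_lt.1 h)))
  obtain ⟨D, hD⟩ := hc.bounded_above_of_compact_support hs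
  exact ⟨D, (norm_nonneg _).trans (hD 0), hD⟩

/-- Interior gradient estimate on a spherical shell for decaying solutions of `Δw = kw`. -/
lemma exists_integral_shellBump_le {d : ℕ} {w : Euc d → ℝ} (hw : ContDiff ℝ 2 w)
    {t₀ t₁ k C a : ℝ} (ht₀ : 0 < t₀) (hw0 : ∀ x, ‖x‖ ^ 2 < t₀ → w x = 0)
    (hlap : ∀ x, t₁ < ‖x‖ ^ 2 → lap w x = k * w x) (ha : 0 < a)
    (hdec : ∀ x, t₁ < ‖x‖ ^ 2 → |w x| ≤ C * Real.exp (-(a * ‖x‖))) :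
    ∃ K, 0 ≤ K ∧ ∀ R, 2 ≤ R → t₁ + 2 < R ^ 2 →
      ∫ x, shellBump (‖x‖ ^ 2 - R ^ 2) * (gradSq w x + w x ^ 2) ≤
        K * (R + 1) ^ (d + 2) * Real.exp (-(2 * a * R)) := by
  have hφ1 : ContDiff ℝ 2 (deriv shellBump) :=
    ((contDiff_succ_iff_deriv (n := 2)).1 contDiff_shellBump).2.2
  have hφ2 : ContDiff ℝ 1 (deriv (deriv shellBump)) :=
    ((contDiff_succ_iff_deriv (n := 1)).1 hφ1).2.2
  have hz1 : ∀ s, 2 < |s| → deriv shellBump s = 0 := fun s hs =>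
    deriv_eq_zero_of_two_lt_abs (fun _ h => shellBump_eq_zero h) hs
  have hz2 : ∀ s, 2 < |s| → deriv (deriv shellBump) s = 0 := fun s hs =>
    deriv_eq_zero_of_two_lt_abs hz1 hs
  obtain ⟨D₁, hD₁, hb1⟩ := exists_abs_le_of_two_lt_abs hφ1.continuous hz1
  obtain ⟨D₂, hD₂, hb2⟩ := exists_abs_le_of_two_lt_abs hφ2.continuous hz2
  set K₁ : ℝ := |k| + 1 + d * D₁ + 2 * D₂ with hK₁
  have hK₁0 : 0 ≤ K₁ := by positivity
  refine ⟨K₁ * (C ^ 2 * Real.exp (2 * a)) * volume.real (ball (0 : Euc d) 1), by positivity, ?_⟩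
  intro R hR hRt
  set β : ℝ → ℝ := fun t => shellBump (t - R ^ 2) with hβ
  set γ : ℝ → ℝ := fun t => -deriv shellBump (t - R ^ 2) with hγ
  have hβ' : ∀ t, deriv β t = deriv shellBump (t - R ^ 2) := fun t => by
    simp only [hβ]; exact deriv_comp_sub_const ..
  have hγ' : ∀ t, deriv γ t = -deriv (deriv shellBump) (t - R ^ 2) := fun t => by
    simp only [hγ]
    rw [deriv.fun_neg, deriv_comp_sub_const]
  have hfar : ∀ t, R ^ 2 + 2 < t → 2 < |t - R ^ 2| := fun t ht =>
    lt_of_lt_of_le (by linarith) (le_abs_self _)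
  obtain ⟨hint, hzero⟩ := integral_pohozaevDiv (α := fun _ => 0) (β := β) (γ := γ)
    (T := R ^ 2 + 2) hw ht₀ hw0 contDiffOn_const
    ((contDiff_shellBump.of_le (by norm_num)).comp (contDiff_id.sub contDiff_const)).contDiffOn
    ((hφ1.of_le (by norm_num)).comp (contDiff_id.sub contDiff_const)).neg.contDiffOn
    (fun _ _ => rfl) (fun t ht => shellBump_eq_zero (hfar t ht))
    (fun t ht => by simp only [hγ, hz1 _ (hfar t ht), neg_zero])
  set m : ℝ := K₁ * (R + 1) ^ 2 * (C ^ 2 * Real.exp (2 * a) * Real.exp (-(2 * a * R))) with hm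
  have hm0 : 0 ≤ m := by positivity
  have hpt : ∀ x : Euc d, shellBump (‖x‖ ^ 2 - R ^ 2) * (gradSq w x + w x ^ 2) ≤
      pohozaevDiv (fun _ => 0) β γ w x + (closedBall (0 : Euc d) (R + 1)).indicator
        (fun _ => m) x := by
    intro x
    have hdiv : pohozaevDiv (fun _ => 0) β γ w x = gradSq w x * shellBump (‖x‖ ^ 2 - R ^ 2)
        + shellBump (‖x‖ ^ 2 - R ^ 2) * w x * lap w x
        - w x ^ 2 * (d * deriv shellBump (‖x‖ ^ 2 - R ^ 2)
          + 2 * ‖x‖ ^ 2 * deriv (deriv shellBump) (‖x‖ ^ 2 - R ^ 2)) := by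
      simp only [pohozaevDiv, hβ', hγ', deriv_const]
      simp only [hβ, hγ]
      ring
    rw [hdiv]
    rcases lt_or_ge 2 |‖x‖ ^ 2 - R ^ 2| with h | h
    · rw [hz1 _ h, hz2 _ h, shellBump_eq_zero h]
      simpa using indicator_nonneg (fun _ _ => hm0) x
    · obtain ⟨hl, hu⟩ := abs_le.1 h
      have hn := norm_nonneg x
      have hxR : ‖x‖ ≤ R + 1 := by nlinarith
      have hRx : R - 1 ≤ ‖x‖ := by nlinarith
      rw [indicator_of_mem (by simpa using hxR), hlap x (by linarith)]
      have hv : w x ^ 2 ≤ C ^ 2 * Real.exp (2 * a) * Real.exp (-(2 * a * R)) := by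
        have h1 : w x ^ 2 ≤ (C * Real.exp (-(a * ‖x‖))) ^ 2 := by
          rw [← sq_abs]
          exact pow_le_pow_left₀ (abs_nonneg _) (hdec x (by linarith)) 2
        refine h1.trans ?_
        rw [mul_pow, ← Real.exp_nat_mul, mul_assoc, ← Real.exp_add]
        gcongr
        push_cast
        nlinarith
      have hm' : K₁ * (R + 1) ^ 2 * w x ^ 2 ≤ m := by rw [hm]; gcongr
      have hx2 : ‖x‖ ^ 2 ≤ (R + 1) ^ 2 := by gcongr
      have hR1 : 1 ≤ (R + 1) ^ 2 := by nlinarith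
      have hb1 := abs_le.1 (hb1 (‖x‖ ^ 2 - R ^ 2))
      have hb2 := abs_le.1 (hb2 (‖x‖ ^ 2 - R ^ 2))
      have hφ0 := shellBump_nonneg (‖x‖ ^ 2 - R ^ 2)
      have hφle := shellBump_le_one (‖x‖ ^ 2 - R ^ 2)
      have hx0 := sq_nonneg ‖x‖
      have hv0 := sq_nonneg (w x)
      generalize shellBump (‖x‖ ^ 2 - R ^ 2) = φ at *
      generalize deriv shellBump (‖x‖ ^ 2 - R ^ 2) = φ₁ at *
      generalize deriv (deriv shellBump) (‖x‖ ^ 2 - R ^ 2) = φ₂ at *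
      generalize ‖x‖ ^ 2 = t at *
      generalize gradSq w x = G at *
      generalize w x = v at *
      generalize (R + 1) ^ 2 = Q at *
      have hcoef : φ - k * φ + (d * φ₁ + 2 * t * φ₂) ≤ K₁ * Q := by
        have hQ0 : 0 ≤ Q := by linarith
        have c1 : φ ≤ 1 * Q := by linarith
        have c2 : -(k * φ) ≤ |k| * Q := by
          have : -(k * φ) ≤ |k| * φ := by
            rw [← neg_mul]; exact mul_le_mul_of_nonneg_right (neg_le_abs k) hφ0
          refine this.trans ?_
          gcongr; linarith
        have c3 : d * φ₁ ≤ d * D₁ * Q := by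
          calc d * φ₁ ≤ d * D₁ := by gcongr; exact hb1.2
            _ ≤ d * D₁ * Q := le_mul_of_one_le_right (by positivity) hR1
        have c4 : t * φ₂ ≤ Q * D₂ := by
          calc t * φ₂ ≤ t * D₂ := by gcongr; exact hb2.2
            _ ≤ Q * D₂ := by gcongr
        rw [hK₁]; linarith
      have := mul_le_mul_of_nonneg_right hcoef hv0
      linarith
  have hcont : Continuous fun x : Euc d =>
      shellBump (‖x‖ ^ 2 - R ^ 2) * (gradSq w x + w x ^ 2) := by
    have h1 := contDiff_shellBump.continuous
    have h2 := (contDiff_gradSq hw).continuous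
    have h3 := hw.continuous
    fun_prop
  have hint1 : Integrable fun x : Euc d =>
      shellBump (‖x‖ ^ 2 - R ^ 2) * (gradSq w x + w x ^ 2) :=
    hcont.integrable_of_hasCompactSupport (hasCompactSupport_of_norm (T := R ^ 2 + 2)
      fun x hx => by simp [shellBump_eq_zero (hfar _ hx)])
  have hint2 : Integrable ((closedBall (0 : Euc d) (R + 1)).indicator fun _ => m) :=
    (integrable_indicator_iff measurableSet_closedBall).2
      (integrableOn_const (measure_closedBall_lt_top.ne))
  calc _ ≤ ∫ x, (pohozaevDiv (fun _ => 0) β γ w x + (closedBall (0 : Euc d) (R + 1)).indicator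
        (fun _ => m) x) := integral_mono hint1 (hint.add hint2) hpt
    _ = volume.real (closedBall (0 : Euc d) (R + 1)) * m := by
      rw [integral_add hint hint2, hzero, integral_indicator measurableSet_closedBall]
      simp
    _ = _ := by
      rw [Measure.addHaar_real_closedBall _ _ (by linarith), hm]
      simp only [finrank_euclideanSpace, Fintype.card_fin]
      ring

/-- Decaying solutions of `Δw = kw` near infinity vanish, when the rate exceeds `√k`. -/
lemma eq_zero_of_lap_eq_of_decay {d : ℕ} (hd : 2 ≤ d) {w : Euc d → ℝ} (hw : ContDiff ℝ 2 w)
    {t₀ t₁ k κ C a : ℝ} (ht₀ : 0 < t₀) (hw0 : ∀ x, ‖x‖ ^ 2 < t₀ → w x = 0) (ht₁ : 0 < t₁)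
    (hlap : ∀ x, t₁ < ‖x‖ ^ 2 → lap w x = k * w x) (hκ : 0 < κ) (hκa : κ < a) (hk : k ≤ κ ^ 2)
    (hdec : ∀ x, t₁ < ‖x‖ ^ 2 → |w x| ≤ C * Real.exp (-(a * ‖x‖)))
    (x : Euc d) (hx : t₁ < ‖x‖ ^ 2) : w x = 0 := by
  refine eq_zero_of_integral_tentBump_nonpos hw (t₁ := t₁) (t₂ := ‖x‖ ^ 2 + 1) (by linarith)
    (fun A => ?_) x hx (by linarith)
  set t₂ := ‖x‖ ^ 2 + 1
  have ht₁₂ : t₁ ≤ t₂ := by simp only [t₂]; linarith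
  obtain ⟨c, hcA, hcd⟩ : ∃ c : ℕ, A ≤ c ∧ d ≤ c :=
    ⟨max ⌈A⌉₊ d, (Nat.le_ceil A).trans (by exact_mod_cast le_max_left _ _), le_max_right _ _⟩
  have hc1 : 1 ≤ c := by omega
  refine ⟨c, hcA, ?_⟩
  obtain ⟨K, hK, hshell⟩ := exists_integral_shellBump_le hw ht₀ hw0 hlap (hκ.trans hκa) hdec
  have hS' : Continuous (deriv Real.smoothTransition) :=
    (Real.smoothTransition.contDiff (n := 1)).continuous_deriv (by norm_num)
  have hSz : ∀ s, s ∉ Icc (0 : ℝ) 1 → deriv Real.smoothTransition s = 0 := by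
    intro s hs
    rcases lt_or_ge s 0 with h | h
    · have : Real.smoothTransition =ᶠ[nhds s] fun _ => 0 := by
        filter_upwards [Iio_mem_nhds h] with y hy
          using Real.smoothTransition.zero_of_nonpos (le_of_lt hy)
      rw [this.deriv_eq]; simp
    · have h1 : 1 < s := by
        by_contra h1
        exact hs ⟨h, not_lt.1 h1⟩
      have : Real.smoothTransition =ᶠ[nhds s] fun _ => 1 := by
        filter_upwards [Ioi_mem_nhds h1] with y hy
          using Real.smoothTransition.one_of_one_le (le_of_lt hy)
      rw [this.deriv_eq]; simp
  obtain ⟨D, hD, hDb⟩ := exists_abs_le_of_two_lt_abs hS' fun s hs => hSz s fun h => by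
    rw [abs_of_nonneg h.1] at hs
    linarith [h.2]
  have hχ' : ∀ T t, deriv (outerCutoff T) t = -deriv Real.smoothTransition (T - t) :=
    fun T t => deriv_comp_const_sub ..
  set K₀ : ℝ := 4 + 2 * (2 * c + 2 * κ + d) ^ 2 + κ + |k| with hK₀
  have hK₀0 : 0 ≤ K₀ := by positivity
  set I : ℝ := ∫ x : Euc d, tentBump t₁ t₂ (‖x‖ ^ 2) * (c * w x ^ 2 - ‖x‖ ^ 2 * gradSq w x)
  set J : ℝ := ∫ s in t₁..t₂, tentBump t₁ t₂ s / expWeight c κ s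
  have hJ : 0 ≤ J := by
    refine intervalIntegral.integral_nonneg ht₁₂ fun s hs => ?_
    exact div_nonneg (tentBump_nonneg _ _ _) (expWeight_pos c κ (ht₁.trans_le hs.1)).le
  have hbound : ∀ R, 2 ≤ R → t₂ + 3 ≤ R ^ 2 → I ≤ J * (D * K₀ * K * Real.exp (2 * (a - κ))) *
      ((R + 1) ^ (2 * c + d + 4) * Real.exp (-(2 * (a - κ) * (R + 1)))) := by
    intro R hR hRt
    set P : ℝ := D * (R ^ (2 * c) * Real.exp (2 * κ * R) * (K₀ * R ^ 2)) with hP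
    have hP0 : 0 ≤ P := by positivity
    have hcont : Continuous fun x : Euc d =>
        shellBump (‖x‖ ^ 2 - R ^ 2) * (gradSq w x + w x ^ 2) := by
      have h1 := contDiff_shellBump.continuous
      have h2 := (contDiff_gradSq hw).continuous
      have h3 := hw.continuous
      fun_prop
    have hint : Integrable fun x : Euc d =>
        shellBump (‖x‖ ^ 2 - R ^ 2) * (gradSq w x + w x ^ 2) :=
      hcont.integrable_of_hasCompactSupport (hasCompactSupport_of_norm (T := R ^ 2 + 2)
        fun x hx => by
          rw [shellBump_eq_zero (lt_of_lt_of_le (by linarith) (le_abs_self _)), zero_mul])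
    have hF0 : ∀ x : Euc d, 0 ≤ shellBump (‖x‖ ^ 2 - R ^ 2) * (gradSq w x + w x ^ 2) := fun x =>
      mul_nonneg (shellBump_nonneg _) (add_nonneg (gradSq_nonneg w x) (sq_nonneg _))
    have hmain := carleman_inequality (α := expWeight c κ) (β := expWeightMid d c κ)
      (γ := expWeightLow d c κ k) (η := tentBump t₁ t₂) (χ := outerCutoff (R ^ 2)) (t₁ := t₁)
      (t₂ := t₂) (T := R ^ 2) (a := c)
      (F := fun x => P * (shellBump (‖x‖ ^ 2 - R ^ 2) * (gradSq w x + w x ^ 2)))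
      hw ht₁ ht₁₂ ht₀ hw0 (contDiffOn_expWeight c κ) (contDiffOn_expWeightMid d c κ)
      (contDiffOn_expWeightLow d c κ k) (fun t ht => expWeight_pos c κ ht)
      (continuous_tentBump _ _) (tentBump_nonneg _ _)
      (fun t ht => tentBump_of_le_left ht₁₂ ht) (fun t ht => tentBump_of_right_le ht₁₂ ht)
      (contDiff_outerCutoff _) (outerCutoff_nonneg _)
      (fun t ht => outerCutoff_of_le (by linarith)) (fun t ht => outerCutoff_of_ge ht.le)
      (fun y hy => pohozaevDiv_expWeight_nonneg hc1 hκ hk (ht₁.trans hy) (hlap y hy))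
      (fun y hy _ => le_pohozaevFlux_expWeight hc1 hcd hd hκ hk (ht₁.trans hy))
      (hint.const_mul P) (fun y => mul_nonneg hP0 (hF0 y)) ?_
    · rw [integral_const_mul] at hmain
      refine hmain.trans ?_
      rw [mul_assoc J]
      refine mul_le_mul_of_nonneg_left ?_ hJ
      calc _ ≤ P * (K * (R + 1) ^ (d + 2) * Real.exp (-(2 * a * R))) :=
            mul_le_mul_of_nonneg_left (hshell R hR (by linarith)) hP0
        _ ≤ D * ((R + 1) ^ (2 * c) * Real.exp (2 * κ * R) * (K₀ * (R + 1) ^ 2)) *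
            (K * (R + 1) ^ (d + 2) * Real.exp (-(2 * a * R))) := by
          rw [hP]; gcongr <;> linarith
        _ = D * K₀ * K * (R + 1) ^ (2 * c + d + 4) *
            (Real.exp (2 * κ * R) * Real.exp (-(2 * a * R))) := by ring
        _ = _ := by
          have e : Real.exp (2 * κ * R) * Real.exp (-(2 * a * R)) =
              Real.exp (2 * (a - κ)) * Real.exp (-(2 * (a - κ) * (R + 1))) := by
            rw [← Real.exp_add, ← Real.exp_add]; congr 1; ring
          rw [e]; ring
    · intro y hy
      rw [hχ', neg_mul, abs_neg, abs_mul]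
      by_cases hmem : R ^ 2 - ‖y‖ ^ 2 ∈ Icc (0 : ℝ) 1
      · have hy0 : 0 < ‖y‖ := by
          have : 0 < ‖y‖ ^ 2 := by linarith
          exact (norm_nonneg y).lt_of_ne fun h => by simp [← h] at this
        have hyR : ‖y‖ ≤ R := by
          have := hmem.1
          nlinarith [norm_nonneg y]
        have hfl := abs_pohozaevFlux_expWeight_le (c := c) (k := k) (w := w) hd hκ hy0
          (by linarith : 1 ≤ R) hyR
        rw [shellBump_eq_one (by linarith [hmem.2]) (by linarith [hmem.1]), one_mul, hP, mul_assoc]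
        exact mul_le_mul (hDb _) hfl (abs_nonneg _) hD
      · rw [hSz _ hmem, abs_zero, zero_mul]
        exact mul_nonneg hP0 (hF0 y)
  have hlim : Tendsto (fun R : ℝ => J * (D * K₀ * K * Real.exp (2 * (a - κ))) *
      ((R + 1) ^ (2 * c + d + 4) * Real.exp (-(2 * (a - κ) * (R + 1))))) atTop (nhds 0) := by
    have h1 := (Real.tendsto_pow_mul_exp_neg_atTop_nhds_zero (2 * c + d + 4))
    have hb : 0 < 2 * (a - κ) := by linarith
    have h2 : Tendsto (fun R : ℝ => 2 * (a - κ) * (R + 1)) atTop atTop :=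
      (tendsto_atTop_add_const_right _ 1 tendsto_id).const_mul_atTop hb
    have h3 := ((h1.comp h2).const_mul (((2 * (a - κ)) ^ (2 * c + d + 4))⁻¹)).const_mul
      (J * (D * K₀ * K * Real.exp (2 * (a - κ))))
    rw [mul_zero, mul_zero] at h3
    refine h3.congr fun R => ?_
    have h4 : (2 * (a - κ)) ^ (2 * c + d + 4) ≠ 0 := (pow_pos hb _).ne'
    rw [Function.comp_apply, mul_pow (2 * (a - κ)), mul_assoc ((2 * (a - κ)) ^ _),
      inv_mul_cancel_left₀ h4]
  refine ge_of_tendsto hlim ?_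
  have hsq : Tendsto (fun R : ℝ => R ^ 2) atTop atTop := tendsto_pow_atTop (by norm_num)
  filter_upwards [eventually_ge_atTop 2, hsq.eventually_ge_atTop (t₂ + 3)] with R h1 h2
    using hbound R h1 h2

lemma pd2_congr {d : ℕ} {f g : Euc d → ℝ} {x : Euc d} (h : f =ᶠ[nhds x] g) (i j : Fin d) :
    pd2 f i j x = pd2 g i j x := by
  have h' : (fun y => pd f j y) =ᶠ[nhds x] fun y => pd g j y :=
    h.eventuallyEq_nhds.mono fun y hy => pd_congr hy j
  exact pd_congr h' i

lemma lap_congr {d : ℕ} {f g : Euc d → ℝ} {x : Euc d} (h : f =ᶠ[nhds x] g) :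
    lap f x = lap g x :=
  Finset.sum_congr rfl fun i _ => pd2_congr h i i

lemma gradSq_congr {d : ℕ} {f g : Euc d → ℝ} {x : Euc d} (h : f =ᶠ[nhds x] g) :
    gradSq f x = gradSq g x :=
  Finset.sum_congr rfl fun i _ => by rw [pd_congr h i]

/-- A `C²` function outside a ball is extended globally after shrinking the exterior domain. -/
lemma exists_contDiff_extension {d : ℕ} {ρ ρ₁ : ℝ} (hρ : 0 ≤ ρ) (hρ₁ : ρ < ρ₁) {f : Euc d → ℝ}
    (hf : ContDiffOn ℝ 2 f (closedBall 0 ρ)ᶜ) :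
    ∃ w : Euc d → ℝ, ContDiff ℝ 2 w ∧ (∃ t₀ > 0, ∀ x, ‖x‖ ^ 2 < t₀ → w x = 0) ∧
      ∀ x, ρ₁ ^ 2 < ‖x‖ ^ 2 → w =ᶠ[nhds x] f := by
  obtain ⟨σ, hρσ, hσρ⟩ := exists_between hρ₁
  have hpos : 0 < ρ₁ ^ 2 - σ ^ 2 := by nlinarith
  set ψ : Euc d → ℝ := fun x => Real.smoothTransition ((‖x‖ ^ 2 - σ ^ 2) / (ρ₁ ^ 2 - σ ^ 2)) with hψ
  have hψs : ContDiff ℝ 2 ψ := Real.smoothTransition.contDiff.comp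
    (((contDiff_norm_sq ℝ).sub contDiff_const).div_const _)
  have hψ0 : ∀ x, ‖x‖ ^ 2 < σ ^ 2 → ψ x = 0 := fun x hx =>
    Real.smoothTransition.zero_of_nonpos (div_nonpos_of_nonpos_of_nonneg (by linarith) hpos.le)
  have hψ1 : ∀ x, ρ₁ ^ 2 < ‖x‖ ^ 2 → ψ x = 1 := fun x hx =>
    Real.smoothTransition.one_of_one_le (by rw [le_div_iff₀ hpos]; linarith)
  refine ⟨fun x => ψ x * f x, contDiff_iff_contDiffAt.2 fun x => ?_,
    ⟨σ ^ 2, by nlinarith, fun x hx => by simp [hψ0 x hx]⟩, fun x hx => ?_⟩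
  · rcases le_or_gt ‖x‖ ρ with h | h
    · have hev : (fun x => ψ x * f x) =ᶠ[nhds x] fun _ => 0 := by
        have hopen : IsOpen {y : Euc d | ‖y‖ ^ 2 < σ ^ 2} :=
          isOpen_lt (by fun_prop) continuous_const
        filter_upwards [hopen.mem_nhds (show ‖x‖ ^ 2 < σ ^ 2 by nlinarith [norm_nonneg x])]
          with y hy
        simp [hψ0 y hy]
      exact contDiffAt_const.congr_of_eventuallyEq hev
    · exact hψs.contDiffAt.mul (hf.contDiffAt (isClosed_closedBall.isOpen_compl.mem_nhds
        (by simpa using h)))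
  · have hopen : IsOpen {y : Euc d | ρ₁ ^ 2 < ‖y‖ ^ 2} := isOpen_lt continuous_const (by fun_prop)
    filter_upwards [hopen.mem_nhds hx] with y hy
    simp [hψ1 y hy]

lemma contDiff_exp_inner {d : ℕ} (b : Euc d) :
    ContDiff ℝ 2 fun y : Euc d => Real.exp (inner ℝ b y / 2) :=
  ((innerSL ℝ b).contDiff.div_const 2).exp

/-- The exponential change of unknown which removes a constant drift. -/
lemma lap_exp_inner_mul {d : ℕ} (b : Euc d) {u : Euc d → ℝ} {x : Euc d}
    (hu : ContDiffAt ℝ 2 u x) :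
    lap (fun y => Real.exp (inner ℝ b y / 2) * u y) x =
      Real.exp (inner ℝ b x / 2) * (lap u x + ∑ i, b i * pd u i x + ‖b‖ ^ 2 / 4 * u x) := by
  set e : Euc d → ℝ := fun y => Real.exp (inner ℝ b y / 2) with he
  have hed : Differentiable ℝ e := (contDiff_exp_inner b).differentiable (by norm_num)
  have hpe : ∀ i y, pd e i y = b i / 2 * e y := by
    intro i y
    have h1 : HasFDerivAt (fun y : Euc d => inner ℝ b y) (innerSL ℝ b) y :=
      (innerSL ℝ b).hasFDerivAt
    have h2 : HasDerivAt (fun s : ℝ => Real.exp (s / 2)) (Real.exp (inner ℝ b y / 2) * (1 / 2))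
      (inner ℝ b y) := ((hasDerivAt_id _).div_const 2).exp
    have h3 := pd_comp (φ := fun s : ℝ => Real.exp (s / 2)) (f := fun y : Euc d => inner ℝ b y)
      h2.differentiableAt h1.differentiableAt i
    have h4 : pd (fun y : Euc d => inner ℝ b y) i y = b i := by
      rw [pd, h1.fderiv]
      simp [EuclideanSpace.inner_single_right]
    rw [h2.deriv, h4] at h3
    refine h3.trans ?_
    simp only [he]; ring
  have hu1 : ∀ᶠ y in nhds x, ContDiffAt ℝ 2 u y := hu.eventually (by simp)
  have hud : DifferentiableAt ℝ u x := hu.differentiableAt (by norm_num)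
  have hpu : ∀ i, DifferentiableAt ℝ (fun y => pd u i y) x := fun i =>
    ((hu.fderiv_right (m := 1) (by norm_num)).differentiableAt (by norm_num)).clm_apply
      (differentiableAt_const _)
  have hfirst : ∀ i, (fun y => pd (fun z => e z * u z) i y) =ᶠ[nhds x]
      fun y => e y * (pd u i y + b i / 2 * u y) := by
    intro i
    filter_upwards [hu1] with y hy
    rw [pd_mul (hed y) (hy.differentiableAt (by norm_num)), hpe]
    ring
  have hsecond : ∀ i, pd2 (fun z => e z * u z) i i x =
      e x * (pd2 u i i x + b i * pd u i x + b i ^ 2 * (u x / 4)) := by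
    intro i
    have hcu : DifferentiableAt ℝ (fun y => b i / 2 * u y) x := hud.const_mul _
    have h1 : pd (fun y => b i / 2 * u y) i x = b i / 2 * pd u i x := by
      rw [pd_mul (differentiableAt_const _) hud]; simp [pd]
    change pd (fun y => pd (fun z => e z * u z) i y) i x = _
    rw [pd_congr (hfirst i), pd_mul (hed x) ((hpu i).fun_add hcu), pd_add (hpu i) hcu, h1, hpe]
    change e x * (pd2 u i i x + _) + _ = _
    ring
  have hb : ‖b‖ ^ 2 / 4 * u x = ∑ i, b i ^ 2 * (u x / 4) := by
    rw [EuclideanSpace.norm_sq_eq, ← Finset.sum_mul]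
    simp only [Real.norm_eq_abs, sq_abs]
    ring
  rw [hb, lap, lap, ← Finset.sum_add_distrib, ← Finset.sum_add_distrib, Finset.mul_sum]
  exact Finset.sum_congr rfl fun i _ => hsecond i

lemma sq_sum_mul_pd_le {d : ℕ} (b : Euc d) (u : Euc d → ℝ) (x : Euc d) :
    (∑ i, b i * pd u i x) ^ 2 ≤ ‖b‖ ^ 2 * gradSq u x := by
  have h := Finset.sum_mul_sq_le_sq_mul_sq Finset.univ (fun i => b i) (fun i => pd u i x)
  rw [EuclideanSpace.norm_sq_eq]
  simpa [gradSq] using h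

end

/-- Theorem 4.3: Landis' conjecture for `Δu + ⟨b,∇u⟩ + Vu = 0` when `b` and `V` are
constant outside a ball. -/
theorem statement17 {d : ℕ} (hd : 2 ≤ d)
    (ρ : ℝ) (hρ : 0 ≤ ρ)
    (b : Euc d → Euc d) (V : Euc d → ℝ) (hbMeas : Measurable b) (hVmeas : Measurable V)
    (M γ : ℝ) (hbM : ∀ x : Euc d, ‖b x‖ ≤ M) (hVγ : ∀ x : Euc d, |V x| ≤ γ)
    (r : ℝ) (hr : 0 < r) (hsub : closedBall (0 : Euc d) ρ ⊆ ball (0 : Euc d) r)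
    (hconst : ∃ (b₀ : Euc d) (k : ℝ), ∀ x ∉ ball (0 : Euc d) r, b x = b₀ ∧ V x = k)
    (u : Euc d → ℝ) (huC2 : ContDiffOn ℝ 2 u (closedBall (0 : Euc d) ρ)ᶜ)
    (hsol : ∀ x ∉ closedBall (0 : Euc d) ρ,
      (∑ i, pd2 u i i x) + (∑ i, b x i * pd u i x) + V x * u x = 0)
    (ε Cε : ℝ) (hε : 0 < ε) (hCε : 0 < Cε)
    (hdecay : ∀ x ∉ closedBall (0 : Euc d) ρ,
      |u x| ≤ Cε * Real.exp (-((M / 2 + Real.sqrt (M ^ 2 / 4 + γ) + ε) * ‖x‖))) :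
    ∀ x ∉ closedBall (0 : Euc d) ρ, u x = 0 := by
  have hρr : ρ < r := by
    have h := hsub (show EuclideanSpace.single (⟨0, by omega⟩ : Fin d) ρ ∈ closedBall (0 : Euc d) ρ
      by simp [abs_of_nonneg hρ])
    simpa [abs_of_nonneg hρ] using h
  have hM : 0 ≤ M := (norm_nonneg _).trans (hbM 0)
  have hγ : 0 ≤ γ := (abs_nonneg _).trans (hVγ 0)
  have hmem : ∀ x : Euc d, x ∉ closedBall (0 : Euc d) ρ ↔ ρ < ‖x‖ := fun x => by simp
  have hat : ∀ x : Euc d, ρ < ‖x‖ → ContDiffAt ℝ 2 u x := fun x hx =>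
    huC2.contDiffAt (isClosed_closedBall.isOpen_compl.mem_nhds ((hmem x).2 hx))
  have hsol' : ∀ x : Euc d, ρ < ‖x‖ → lap u x + ∑ i, b x i * pd u i x + V x * u x = 0 :=
    fun x hx => hsol x ((hmem x).2 hx)
  obtain ⟨b₀, k, hbk⟩ := hconst
  have hext : ∀ x : Euc d, r < ‖x‖ → u x = 0 := by
    set s := √(M ^ 2 / 4 + γ) with hs
    have hs0 : 0 ≤ s := Real.sqrt_nonneg _
    have hs2 : s ^ 2 = M ^ 2 / 4 + γ := Real.sq_sqrt (by positivity)
    obtain ⟨w, hw, ⟨t₀, ht₀, hw0⟩, hwf⟩ := exists_contDiff_extension hρ hρr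
      (f := fun y => Real.exp (inner ℝ b₀ y / 2) * u y)
      ((contDiff_exp_inner b₀).contDiffOn.mul huC2)
    have hcoef : ∀ x : Euc d, r < ‖x‖ → b x = b₀ ∧ V x = k := fun x hx =>
      hbk x (by simpa using hx.le)
    have hnorm : ∀ x : Euc d, r ^ 2 < ‖x‖ ^ 2 → r < ‖x‖ := fun x hx =>
      lt_of_pow_lt_pow_left₀ 2 (norm_nonneg x) hx
    intro x hx
    have hx2 : r ^ 2 < ‖x‖ ^ 2 := by gcongr
    have hbM₀ : ‖b₀‖ ≤ M := (hcoef x hx).1 ▸ hbM x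
    have hkγ : |k| ≤ γ := (hcoef x hx).2 ▸ hVγ x
    have hzero := eq_zero_of_lap_eq_of_decay hd hw (t₁ := r ^ 2) (k := ‖b₀‖ ^ 2 / 4 - k)
      (κ := s + ε / 2) (a := s + ε) (C := Cε) ht₀ hw0 (by positivity) ?_ (by positivity)
      (by linarith) ?_ ?_ x hx2
    · rw [(hwf x hx2).eq_of_nhds] at hzero
      exact (mul_eq_zero.1 hzero).resolve_left (Real.exp_pos _).ne'
    · intro y hy
      have hry := hnorm y hy
      rw [lap_congr (hwf y hy), (hwf y hy).eq_of_nhds, lap_exp_inner_mul b₀ (hat y (hρr.trans hry))]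
      have h := hsol' y (hρr.trans hry)
      rw [(hcoef y hry).1, (hcoef y hry).2] at h
      linear_combination Real.exp (inner ℝ b₀ y / 2) * h
    · have h1 : ‖b₀‖ ^ 2 ≤ M ^ 2 := by gcongr
      have h2 := (abs_le.1 hkγ).1
      nlinarith
    · intro y hy
      have hry := hnorm y hy
      rw [(hwf y hy).eq_of_nhds, abs_mul, abs_of_pos (Real.exp_pos _)]
      have hin : inner ℝ b₀ y ≤ M * ‖y‖ := (real_inner_le_norm b₀ y).trans (by gcongr)
      calc _ ≤ Real.exp (M * ‖y‖ / 2) * (Cε * Real.exp (-((M / 2 + s + ε) * ‖y‖))) := by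
            gcongr
            exact hdecay y ((hmem y).2 (hρr.trans hry))
        _ = Cε * (Real.exp (M * ‖y‖ / 2) * Real.exp (-((M / 2 + s + ε) * ‖y‖))) := by ring
        _ = _ := by rw [← Real.exp_add]; congr 2; ring
  intro x hx
  have hρx := (hmem x).1 hx
  rcases lt_or_ge r ‖x‖ with hrx | hxr
  · exact hext x hrx
  obtain ⟨ρ₁, hρρ₁, hρ₁x⟩ := exists_between hρx
  have hρ₁0 : 0 < ρ₁ := hρ.trans_lt hρρ₁
  obtain ⟨w, hw, ⟨t₀, ht₀, hw0⟩, hwu⟩ := exists_contDiff_extension hρ hρρ₁ huC2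
  have hx2 : ρ₁ ^ 2 < ‖x‖ ^ 2 := by gcongr
  rw [← (hwu x hx2).eq_of_nhds]
  refine eq_zero_of_lap_sq_le (C := 2 * M ^ 2 + 2 * γ ^ 2 + 1) (t₁ := ρ₁ ^ 2) (t₂ := (r + 1) ^ 2)
    (by omega) hw ht₀ hw0 (by positivity) (by nlinarith [sq_nonneg M, sq_nonneg γ])
    (fun y hy => ?_) (fun y hy => ?_) x hx2
  · have hρy : ρ < ‖y‖ := hρρ₁.trans (lt_of_pow_lt_pow_left₀ 2 (norm_nonneg y) hy)
    rw [lap_congr (hwu y hy), gradSq_congr (hwu y hy), (hwu y hy).eq_of_nhds]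
    have h := hsol' y hρy
    have h1 := sq_sum_mul_pd_le (b y) u y
    have hG := gradSq_nonneg u y
    have h2 : ‖b y‖ ^ 2 * gradSq u y ≤ M ^ 2 * gradSq u y := by
      have := hbM y
      gcongr
    have h3 : V y ^ 2 * u y ^ 2 ≤ γ ^ 2 * u y ^ 2 := by
      have : V y ^ 2 ≤ γ ^ 2 := sq_le_sq' (abs_le.1 (hVγ y)).1 (abs_le.1 (hVγ y)).2
      gcongr
    have h4 : lap u y = -(∑ i, b y i * pd u i y) - V y * u y := by linarith
    rw [h4]
    generalize ∑ i, b y i * pd u i y = S at *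
    have h5 : (-S - V y * u y) ^ 2 ≤ 2 * S ^ 2 + 2 * (V y ^ 2 * u y ^ 2) := by
      linarith [sq_nonneg (S - V y * u y)]
    have h6 : 0 ≤ M ^ 2 * u y ^ 2 := by positivity
    have h7 : 0 ≤ γ ^ 2 * gradSq u y := by positivity
    have h8 := sq_nonneg (u y)
    linarith
  · have hry : r + 1 ≤ ‖y‖ := le_of_sq_le_sq hy (norm_nonneg y)
    rw [(hwu y (by gcongr; linarith)).eq_of_nhds]
    exact hext y (by linarith)
end
end
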